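/- Let n ≥ 4, let L be one of W(n), S(n), or (for n even) S̃(n) over ℂ, and let θ denote the zero weight with respect to the standard Cartan subalgebra H_L. If f ∈ BDer(L)_θ, then f is inner: there exists λ ∈ ℂ such that f(x,y) = λ[x,y] for all x, y ∈ L. -/

import Mathlib

open scoped BigOperators

noncomputable section

namespace CartanSuper

/-- Coordinates of the exterior algebra `Λ(n)` with respect to the monomial basis
`{x_S : S ⊆ {1,…,n}}`. -/
abbrev Lambda (n : ℕ) := Finset (Fin n) → ℂ

/-- Endomorphism algebra of `Λ(n)`. -/
abbrev E (n : ℕ) := Module.End ℂ (Lambda n)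

variable (n : ℕ)

/-- `(−1)^k`. -/
def msign (k : ℕ) : ℂ := (-1 : ℂ) ^ k

/-- The basis monomial `x_S = x_{i₁}⋯x_{i_k}` (indices in increasing order). -/
def mono (S : Finset (Fin n)) : Lambda n := fun T => if T = S then 1 else 0

/-- Number of inversions between `S` and `T`. -/
def inversions (S T : Finset (Fin n)) : ℕ := ((S ×ˢ T).filter fun p => p.2 < p.1).card

/-- The multiplication of `Λ(n)` in coordinates:
`x_S · x_T = (−1)^{inversions} x_{S ∪ T}` for disjoint `S, T` and `0` otherwise. -/
def lmulFun (f g : Lambda n) : Lambda n :=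
  fun U => ∑ S ∈ U.powerset, msign (inversions n S (U \ S)) * f S * g (U \ S)

/-- Left multiplication by an element of `Λ(n)`, as a linear map `Λ(n) →ₗ End Λ(n)`. -/
def mulOp : Lambda n →ₗ[ℂ] E n where
  toFun f :=
    { toFun := lmulFun n f
      map_add' := by
        intro g h; funext U
        simp [lmulFun, mul_add, Finset.sum_add_distrib]
      map_smul' := by
        intro c g; funext U
        simp only [lmulFun, Pi.smul_apply, smul_eq_mul, RingHom.id_apply, Finset.mul_sum]
        exact Finset.sum_congr rfl (by intros; ring) }
  map_add' := by
    intro f g; apply LinearMap.ext; intro h; funext U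
    show lmulFun n (f + g) h U = lmulFun n f h U + lmulFun n g h U
    simp only [lmulFun]
    rw [← Finset.sum_add_distrib]
    exact Finset.sum_congr rfl (by intros; simp [Pi.add_apply]; ring)
  map_smul' := by
    intro c f; apply LinearMap.ext; intro h; funext U
    show lmulFun n (c • f) h U = (c • lmulFun n f h) U
    simp only [lmulFun, Pi.smul_apply, smul_eq_mul, Finset.mul_sum]
    exact Finset.sum_congr rfl (by intros; ring)

/-- The superderivation `∂_i` of `Λ(n)`, in coordinates. -/
def pd (i : Fin n) : E n where
  toFun f := fun S =>
    if i ∈ S then 0 else msign (S.filter (· < i)).card * f (insert i S)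
  map_add' := by
    intro f g; funext S; by_cases h : i ∈ S <;> simp [h, mul_add]
  map_smul' := by
    intro c f; funext S; by_cases h : i ∈ S <;> simp [h] <;> ring

/-- The parity operator `σ` of `Λ(n)`: `σ(x_S) = (−1)^{|S|} x_S`. -/
def par : E n where
  toFun f := fun S => msign S.card * f S
  map_add' := by intro f g; funext S; simp [mul_add]
  map_smul' := by intro c f; funext S; simp; ring

/-- The super-commutator `[D,F] = D∘F − (−1)^{|D||F|} F∘D`, extended bilinearly to all of
`End Λ(n)` using the parity operator `σ`
(for homogeneous `D`, `σ∘D∘σ = (−1)^{|D|} D`). -/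
def sbFun (D F : E n) : E n :=
  D * F - (2:ℂ)⁻¹ • ((F + par n * F * par n) * D + (F - par n * F * par n) * (par n * D * par n))

/-- The super-commutator as a bilinear map. -/
def sbL : E n →ₗ[ℂ] E n →ₗ[ℂ] E n :=
  LinearMap.mk₂ ℂ (sbFun n)
    (fun D D' F => by
      simp only [sbFun, add_mul, sub_mul, mul_add, mul_sub, smul_mul_assoc, mul_smul_comm,
        smul_add, smul_sub]
      module)
    (fun c D F => by
      simp only [sbFun, add_mul, sub_mul, mul_add, mul_sub, smul_mul_assoc, mul_smul_comm,
        smul_add, smul_sub]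
      module)
    (fun D F F' => by
      simp only [sbFun, add_mul, sub_mul, mul_add, mul_sub, smul_mul_assoc, mul_smul_comm,
        smul_add, smul_sub]
      module)
    (fun c D F => by
      simp only [sbFun, add_mul, sub_mul, mul_add, mul_sub, smul_mul_assoc, mul_smul_comm,
        smul_add, smul_sub]
      module)

/-- Shorthand for the super-commutator. -/
def sb (D F : E n) : E n := sbL n D F

/-- The ℤ₂-homogeneous component of `Λ(n)` of parity `p`. -/
def lpar (p : ZMod 2) : Submodule ℂ (Lambda n) where
  carrier := {f | ∀ S : Finset (Fin n), (S.card : ZMod 2) ≠ p → f S = 0}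
  add_mem' := by intro f g hf hg S hS; simp [Pi.add_apply, hf S hS, hg S hS]
  zero_mem' := by intro S hS; rfl
  smul_mem' := by intro c f hf S hS; simp [Pi.smul_apply, hf S hS]

/-- The ℤ-homogeneous component of `Λ(n)` of degree `m` (zero unless `0 ≤ m ≤ n`). -/
def ldeg (m : ℤ) : Submodule ℂ (Lambda n) where
  carrier := {f | ∀ S : Finset (Fin n), (S.card : ℤ) ≠ m → f S = 0}
  add_mem' := by intro f g hf hg S hS; simp [Pi.add_apply, hf S hS, hg S hS]
  zero_mem' := by intro S hS; rfl
  smul_mem' := by intro c f hf S hS; simp [Pi.smul_apply, hf S hS]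

/-- Endomorphisms of `Λ(n)` that are ℤ₂-homogeneous of parity `p`. -/
def epar (p : ZMod 2) : Submodule ℂ (E n) where
  carrier := {D | ∀ (q : ZMod 2), ∀ f ∈ lpar n q, D f ∈ lpar n (q + p)}
  add_mem' := by
    intro D F hD hF q f hf
    simpa [LinearMap.add_apply] using (lpar n (q + p)).add_mem (hD q f hf) (hF q f hf)
  zero_mem' := by intro q f hf; simpa using (lpar n (q + p)).zero_mem
  smul_mem' := by
    intro c D hD q f hf
    simpa [LinearMap.smul_apply] using (lpar n (q + p)).smul_mem c (hD q f hf)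

/-- Endomorphisms of `Λ(n)` that are ℤ-homogeneous of degree `d`. -/
def edeg (d : ℤ) : Submodule ℂ (E n) where
  carrier := {D | ∀ (m : ℤ), ∀ f ∈ ldeg n m, D f ∈ ldeg n (m + d)}
  add_mem' := by
    intro D F hD hF m f hf
    simpa [LinearMap.add_apply] using (ldeg n (m + d)).add_mem (hD m f hf) (hF m f hf)
  zero_mem' := by intro m f hf; simpa using (ldeg n (m + d)).zero_mem
  smul_mem' := by
    intro c D hD m f hf
    simpa [LinearMap.smul_apply] using (ldeg n (m + d)).smul_mem c (hD m f hf)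

/-- The linear map `(f₁,…,f_n) ↦ ∑ᵢ fᵢ ∂ᵢ`. -/
def Wmap : (Fin n → Lambda n) →ₗ[ℂ] E n where
  toFun F := ∑ i, mulOp n (F i) * pd n i
  map_add' := by
    intro F G
    simp only [Pi.add_apply, map_add, add_mul, Finset.sum_add_distrib]
  map_smul' := by
    intro c F
    simp only [RingHom.id_apply, Pi.smul_apply, map_smul, smul_mul_assoc, Finset.smul_sum]

/-- The divergence `(f₁,…,f_n) ↦ ∑ᵢ ∂ᵢ(fᵢ)`. -/
def divMap : (Fin n → Lambda n) →ₗ[ℂ] Lambda n where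
  toFun F := ∑ i, pd n i (F i)
  map_add' := by
    intro F G
    simp only [Pi.add_apply, map_add, Finset.sum_add_distrib]
  map_smul' := by
    intro c F
    simp only [RingHom.id_apply, Pi.smul_apply, map_smul, Finset.smul_sum]

/-- The Witt type Lie superalgebra `W(n) = {∑ fᵢ∂ᵢ : fᵢ ∈ Λ(n)}`. -/
def Wn : Submodule ℂ (E n) := LinearMap.range (Wmap n)

/-- Divergence-free coefficient tuples. -/
def divFree : Submodule ℂ (Fin n → Lambda n) := LinearMap.ker (divMap n)

/-- The special type Lie superalgebra `S(n) = {∑ fᵢ∂ᵢ : ∑ ∂ᵢ(fᵢ) = 0}`. -/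
def Sn : Submodule ℂ (E n) := (divFree n).map (Wmap n)

/-- The top monomial `ω = x₁x₂⋯x_n`. -/
def omegaTop : Lambda n := mono n Finset.univ

/-- `1 − x₁x₂⋯x_n`. -/
def oneM : Lambda n := mono n ∅ - omegaTop n

/-- Multiplication of every coefficient by `1 − x₁⋯x_n`. -/
def oneMScale : (Fin n → Lambda n) →ₗ[ℂ] (Fin n → Lambda n) :=
  LinearMap.pi fun i => (mulOp n (oneM n)) ∘ₗ LinearMap.proj i

/-- The Lie superalgebra `S̃(n) = {(1−x₁⋯x_n)∑ fᵢ∂ᵢ : ∑ ∂ᵢ(fᵢ) = 0}` (`n` even). -/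
def Stn : Submodule ℂ (E n) := (divFree n).map (Wmap n ∘ₗ oneMScale n)

/-- The conjugate index `i'`. -/
def cidx (i : Fin n) : Fin n :=
  ⟨if i.val < n / 2 then i.val + n / 2 else if i.val < 2 * (n / 2) then i.val - n / 2 else i.val,
   by have := i.isLt; split_ifs <;> omega⟩

/-- The linear map `f ↦ D_H(f) = (−1)^{|f|} ∑ᵢ ∂ᵢ(f)∂_{i'}` (the sign is implemented by the
parity operator `σ`, so that this is a single linear map agreeing with `D_H` on homogeneous
elements). -/
def DHmap : Lambda n →ₗ[ℂ] E n where
  toFun f := ∑ i, mulOp n (pd n i (par n f)) * pd n (cidx n i)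
  map_add' := by
    intro f g
    simp only [map_add, add_mul, Finset.sum_add_distrib]
  map_smul' := by
    intro c f
    simp only [RingHom.id_apply, map_smul, smul_mul_assoc, Finset.smul_sum]

/-- Evaluation of the top coefficient. -/
def evalTop : Lambda n →ₗ[ℂ] ℂ := LinearMap.proj Finset.univ

/-- The Hamiltonian Lie superalgebra `H(n) = {D_H(f) : f ∈ ⊕_{i=0}^{n−1} Λ(n)_i}`. -/
def Hn : Submodule ℂ (E n) := (LinearMap.ker (evalTop n)).map (DHmap n)

/-- `H̃(n) = {D_H(f) : f ∈ Λ(n)}`. -/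
def HtN : Submodule ℂ (E n) := LinearMap.range (DHmap n)

/-- The degree derivation `𝒞 = ∑ᵢ xᵢ∂ᵢ`. -/
def CC : E n := ∑ i, mulOp n (mono n {i}) * pd n i

/-- The span of the diagonal elements `xᵢ∂ᵢ`. -/
def diagSpan : Submodule ℂ (E n) :=
  Submodule.span ℂ (Set.range fun i : Fin n => mulOp n (mono n {i}) * pd n i)

/-- The four families of Cartan type Lie superalgebras. -/
inductive CT | W | S | St | H
deriving DecidableEq

/-- Validity of the parameter `n` for each family. -/
def CT.valid : CT → ℕ → Prop
  | .W, n => 4 ≤ n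
  | .S, n => 4 ≤ n
  | .St, n => 4 ≤ n ∧ Even n
  | .H, n => 4 < n

/-- The Cartan type Lie superalgebra `L` itself. -/
def CT.algebra : CT → (n : ℕ) → Submodule ℂ (E n)
  | .W, n => Wn n
  | .S, n => Sn n
  | .St, n => Stn n
  | .H, n => Hn n

/-- The extended algebra `L'`: `L' = L` for `W(n)` and `S̃(n)`, `L' = S(n) ⊕ ℂ𝒞` for `S(n)`,
and `L' = H̃(n) ⊕ ℂ𝒞` for `H(n)`. -/
def CT.prime : CT → (n : ℕ) → Submodule ℂ (E n)
  | .W, n => Wn n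
  | .S, n => Sn n ⊔ Submodule.span ℂ {CC n}
  | .St, n => Stn n
  | .H, n => HtN n ⊔ Submodule.span ℂ {CC n}

/-- The top degree `ξ_L` of the ℤ-grading. -/
def CT.xi : CT → (n : ℕ) → ℤ
  | .W, n => (n : ℤ) - 1
  | .S, n => (n : ℤ) - 2
  | .St, n => (n : ℤ) - 2
  | .H, n => (n : ℤ) - 3

/-- The ℤ-grading component `L_j = L ∩ W(n)_j`; for `S̃(n)` the component of degree `−1`
is `span{(1−x₁⋯x_n)∂ᵢ}` instead. -/
def CT.grade (t : CT) (n : ℕ) (j : ℤ) : Submodule ℂ (E n) :=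
  match t with
  | .St =>
      if j = -1 then
        Submodule.span ℂ (Set.range fun i : Fin n => mulOp n (oneM n) * pd n i)
      else Stn n ⊓ edeg n j
  | t => t.algebra n ⊓ edeg n j

/-- The ℤ-grading component `L'_j` of the extended algebra `L'`. -/
def CT.grade' (t : CT) (n : ℕ) (j : ℤ) : Submodule ℂ (E n) :=
  match t with
  | .St => CT.grade .St n j
  | t => t.prime n ⊓ edeg n j

/-- The standard Cartan subalgebra `H_L` of `L`: the part of the diagonal
`span{xᵢ∂ᵢ}` lying in `L`. -/
def CT.cartan (t : CT) (n : ℕ) : Submodule ℂ (E n) := t.algebra n ⊓ diagSpan n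

/-- The weight space of `M ⊆ End Λ(n)` of weight `μ ∈ H_L^*` under the adjoint action
of the standard Cartan subalgebra of `L`. -/
def wtsp (t : CT) (n : ℕ) (M : Submodule ℂ (E n)) (μ : Module.Dual ℂ (t.cartan n)) :
    Submodule ℂ (E n) where
  carrier := {x | x ∈ M ∧ ∀ h : t.cartan n, sbL n h x = μ h • x}
  add_mem' := by
    rintro x y ⟨hx, hx'⟩ ⟨hy, hy'⟩
    exact ⟨M.add_mem hx hy, fun h => by simp [map_add, hx' h, hy' h, smul_add]⟩
  zero_mem' := ⟨M.zero_mem, fun h => by simp⟩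
  smul_mem' := by
    rintro c x ⟨hx, hx'⟩
    exact ⟨M.smul_mem c hx, fun h => by simp [map_smul, hx' h, smul_comm c]⟩

/-- The set of roots of `M` with respect to the standard Cartan subalgebra of `L`:
the nonzero weights with nonzero weight space. -/
def CT.roots (t : CT) (n : ℕ) (M : Submodule ℂ (E n)) : Set (Module.Dual ℂ (t.cartan n)) :=
  {ε | ε ≠ 0 ∧ wtsp t n M ε ≠ ⊥}

/-- The sign `(−1)^p` for `p ∈ ℤ₂`. -/
def sgn (p : ZMod 2) : ℂ := (-1 : ℂ) ^ p.val

/-- `f` is a super-biderivation of `L` of ℤ₂-degree `pf`: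
a bilinear map with `f(L_α, L_β) ⊆ L_{α+β+pf}` satisfying
`f([x,y],z) = (−1)^{|x||f|}[x,f(y,z)] + (−1)^{|y||z|}[f(x,z),y]` and
`f(x,[y,z]) = [f(x,y),z] + (−1)^{(|f|+|x|)|y|}[y,f(x,z)]` for homogeneous `x,y,z ∈ L`.
(The bilinear map is given as a bilinear map on the ambient space `End Λ(n)`;
only its restriction to `L` is relevant.) -/
structure IsSuperBider (L : Submodule ℂ (E n)) (pf : ZMod 2)
    (f : E n →ₗ[ℂ] E n →ₗ[ℂ] E n) : Prop where
  maps : ∀ (α β : ZMod 2), ∀ x ∈ L ⊓ epar n α, ∀ y ∈ L ⊓ epar n β,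
    f x y ∈ L ⊓ epar n (α + β + pf)
  eq1 : ∀ (α β γ : ZMod 2), ∀ x ∈ L ⊓ epar n α, ∀ y ∈ L ⊓ epar n β, ∀ z ∈ L ⊓ epar n γ,
    f (sbL n x y) z = sgn (α * pf) • sbL n x (f y z) + sgn (β * γ) • sbL n (f x z) y
  eq2 : ∀ (α β γ : ZMod 2), ∀ x ∈ L ⊓ epar n α, ∀ y ∈ L ⊓ epar n β, ∀ z ∈ L ⊓ epar n γ,
    f x (sbL n y z) = sbL n (f x y) z + sgn ((pf + α) * β) • sbL n y (f x z)

/-- `D` is a superderivation of `L` of ℤ₂-degree `p`: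
`D(L_α) ⊆ L_{α+p}` and `D([x,y]) = [D(x),y] + (−1)^{|D||x|}[x,D(y)]` for homogeneous
`x, y ∈ L`. (Given as a linear map on the ambient space `End Λ(n)`.) -/
structure IsSuperDer (L : Submodule ℂ (E n)) (p : ZMod 2)
    (D : E n →ₗ[ℂ] E n) : Prop where
  maps : ∀ (α : ZMod 2), ∀ x ∈ L ⊓ epar n α, D x ∈ L ⊓ epar n (α + p)
  leib : ∀ (α β : ZMod 2), ∀ x ∈ L ⊓ epar n α, ∀ y ∈ L ⊓ epar n β,
    D (sbL n x y) = sbL n (D x) y + sgn (p * α) • sbL n x (D y)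

/-- `f ∈ BDer(L)_ε`: the super-biderivation `f` has weight `ε ∈ H_L^*`, i.e.
`f(L_η, L_ζ) ⊆ L_{ε+η+ζ}` for all weights `η, ζ`. -/
def CT.HasWeight (t : CT) (n : ℕ) (f : E n →ₗ[ℂ] E n →ₗ[ℂ] E n)
    (ε : Module.Dual ℂ (t.cartan n)) : Prop :=
  ∀ (η ζ : Module.Dual ℂ (t.cartan n)),
    ∀ x ∈ wtsp t n (t.algebra n) η, ∀ y ∈ wtsp t n (t.algebra n) ζ,
      f x y ∈ wtsp t n (t.algebra n) (ε + η + ζ)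

/-- `f ∈ BDer(L)_i`: the super-biderivation `f` has ℤ-degree `i`, i.e.
`f(L_j, L_k) ⊆ L_{i+j+k}` for all `j, k ∈ ℤ`. -/
def CT.HasDeg (t : CT) (n : ℕ) (f : E n →ₗ[ℂ] E n →ₗ[ℂ] E n) (i : ℤ) : Prop :=
  ∀ (j k : ℤ), ∀ x ∈ t.grade n j, ∀ y ∈ t.grade n k, f x y ∈ t.grade n (i + j + k)



/-! ## Clifford relations -/

/-- sign of moving `x_i` into place -/
def sg (i : Fin n) (U : Finset (Fin n)) : ℂ := msign (U.filter (· < i)).card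

/-- multiplication by `x_S` -/
def AA (S : Finset (Fin n)) : E n := mulOp n (mono n S)

/-- multiplication by `x_i` -/
def XX (i : Fin n) : E n := mulOp n (mono n {i})

lemma sg_sq (i : Fin n) (U : Finset (Fin n)) : sg n i U * sg n i U = 1 := by
  simp [sg, msign, ← pow_add, ← two_mul]

lemma sg_ne (i : Fin n) (U : Finset (Fin n)) : sg n i U ≠ 0 := by
  intro h; have := sg_sq n i U; simp [h] at this

lemma sg_insert (i j : Fin n) (U : Finset (Fin n)) (h : j ∉ U) :
    sg n i (insert j U) = if j < i then - sg n i U else sg n i U := by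
  unfold sg msign
  rw [Finset.filter_insert]
  split_ifs with hji
  · rw [Finset.card_insert_of_notMem (by simp [h]), pow_succ]; ring
  · rfl

lemma sg_erase (i j : Fin n) (U : Finset (Fin n)) (h : j ∈ U) :
    sg n i (U.erase j) = if j < i then - sg n i U else sg n i U := by
  have := sg_insert n i j (U.erase j) (Finset.notMem_erase j U)
  rw [Finset.insert_erase h] at this
  rw [this]; split_ifs <;> simp

lemma pd_apply (i : Fin n) (f : Lambda n) (U : Finset (Fin n)) :
    pd n i f U = if i ∈ U then 0 else sg n i U * f (insert i U) := rfl

lemma AA_apply (S : Finset (Fin n)) (f : Lambda n) (U : Finset (Fin n)) :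
    AA n S f U = if S ⊆ U then msign (inversions n S (U \ S)) * f (U \ S) else 0 := by
  show lmulFun n (mono n S) f U = _
  unfold lmulFun mono
  split_ifs with h
  · rw [Finset.sum_eq_single S]
    · simp
    · intro b _ hb; simp [hb]
    · intro h'; exact absurd (Finset.mem_powerset.2 h) h'
  · apply Finset.sum_eq_zero
    intro b hb
    have : b ≠ S := by rintro rfl; exact h (Finset.mem_powerset.1 hb)
    simp [this]

lemma inv_singleton (i : Fin n) (U : Finset (Fin n)) :
    inversions n {i} U = (U.filter (· < i)).card := by
  unfold inversions
  apply Finset.card_bij (fun p _ => p.2)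
  · simp
    try (intros; constructor <;> assumption)
  · rintro ⟨a, b⟩ h1 ⟨c, d⟩ h2 h3
    simp at h1 h2 h3
    simp [← h1.1.2, ← h2.1.2, h3]
  · intro b hb; exact ⟨(i, b), by simpa using hb, rfl⟩

lemma inv_insert (i : Fin n) (S U : Finset (Fin n)) (h : i ∉ S) :
    inversions n (insert i S) U = inversions n {i} U + inversions n S U := by
  unfold inversions
  rw [Finset.insert_eq, Finset.union_product, Finset.filter_union, Finset.card_union_of_disjoint]
  apply Finset.disjoint_filter_filter
  rw [Finset.disjoint_product]
  left; simpa using h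

lemma XX_apply (i : Fin n) (f : Lambda n) (U : Finset (Fin n)) :
    XX n i f U = if i ∈ U then sg n i U * f (U.erase i) else 0 := by
  have := AA_apply n {i} f U
  rw [show XX n i = AA n {i} from rfl, this]
  simp only [Finset.singleton_subset_iff]
  split_ifs with h
  · rw [inv_singleton, Finset.sdiff_singleton_eq_erase]
    have := sg_erase n i i U h
    simp only [lt_irrefl, if_false] at this
    rw [← this]; rfl
  · rfl

lemma AA_empty : AA n ∅ = 1 := by
  apply LinearMap.ext; intro f; funext U
  rw [AA_apply]; simp [inversions, msign]

lemma XX_AA (i : Fin n) (S : Finset (Fin n)) (h : i ∉ S) :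
    XX n i * AA n S = sg n i S • AA n (insert i S) := by
  apply LinearMap.ext; intro f; funext U
  rw [Module.End.mul_apply, LinearMap.smul_apply, Pi.smul_apply, XX_apply, AA_apply, AA_apply,
    smul_eq_mul]
  by_cases hi : i ∈ U
  · by_cases hS : S ⊆ U
    · have h1 : S ⊆ U.erase i := fun a ha => Finset.mem_erase.2 ⟨fun e => h (e ▸ ha), hS ha⟩
      have h2 : insert i S ⊆ U := Finset.insert_subset hi hS
      rw [if_pos hi, if_pos h1, if_pos h2]
      have h3 : U.erase i \ S = U \ insert i S := by ext a; simp; tauto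
      rw [h3, inv_insert n i S _ h]
      have h4 : sg n i U = sg n i S * sg n i (U \ insert i S) := by
        unfold sg msign
        rw [← pow_add, ← Finset.card_union_of_disjoint]
        · congr 2
          ext a; simp only [Finset.mem_filter, Finset.mem_union, Finset.mem_sdiff,
            Finset.mem_insert]
          constructor
          · rintro ⟨h5, h6⟩
            by_cases a ∈ S
            · left; tauto
            · right; refine ⟨⟨h5, ?_⟩, h6⟩
              rintro (rfl | h7)
              · exact lt_irrefl _ h6
              · tauto
          · rintro (h5 | h5)
            · exact ⟨hS h5.1, h5.2⟩
            · exact ⟨h5.1.1, h5.2⟩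
        · apply Finset.disjoint_filter_filter
          rw [Finset.disjoint_left]; intro a ha; simp; tauto
      rw [h4, inv_singleton]
      simp only [sg, msign, pow_add]; ring
    · have h1 : ¬ S ⊆ U.erase i := fun h => hS (h.trans (Finset.erase_subset _ _))
      have h2 : ¬ insert i S ⊆ U := fun h => hS ((Finset.subset_insert _ _).trans h)
      simp [h1, h2]
  · have h2 : ¬ insert i S ⊆ U := fun h => hi (h (Finset.mem_insert_self _ _))
    simp [hi, h2]

lemma AA_insert (i : Fin n) (S : Finset (Fin n)) (h : i ∉ S) :
    AA n (insert i S) = sg n i S • (XX n i * AA n S) := by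
  rw [XX_AA n i S h, smul_smul, sg_sq, one_smul]

lemma car_PP (i j : Fin n) : pd n i * pd n j = - (pd n j * pd n i) := by
  apply LinearMap.ext; intro f; funext U
  simp only [Module.End.mul_apply, LinearMap.neg_apply, Pi.neg_apply, pd_apply]
  by_cases hij : i = j
  · subst hij; simp
  by_cases hi : i ∈ U
  · simp [hi]
  by_cases hj : j ∈ U
  · simp [hj]
  simp only [hi, hj, Finset.mem_insert, hij, Ne.symm hij, or_self, if_false, sg_insert n _ _ U hi,
    sg_insert n _ _ U hj, Finset.insert_comm i j U]
  rcases lt_or_gt_of_ne hij with h | h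
  · simp [h, h.not_gt]; ring
  · simp [h, h.not_gt]; ring

lemma car_XX (i j : Fin n) : XX n i * XX n j = - (XX n j * XX n i) := by
  apply LinearMap.ext; intro f; funext U
  simp only [Module.End.mul_apply, LinearMap.neg_apply, Pi.neg_apply, XX_apply]
  by_cases hij : i = j
  · subst hij; simp
  by_cases hi : i ∈ U
  swap
  · simp [hi]
  by_cases hj : j ∈ U
  swap
  · simp [hj]
  simp only [hi, hj, Finset.mem_erase, ne_eq, hij, Ne.symm hij, not_false_eq_true, and_self,
    if_true, sg_erase n _ _ U hi, sg_erase n _ _ U hj, Finset.erase_right_comm (a := i) (b := j)]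
  rcases lt_or_gt_of_ne hij with h | h
  · simp [h, h.not_gt]; ring
  · simp [h, h.not_gt]; ring

lemma car_PX_ne (i j : Fin n) (hij : i ≠ j) : pd n i * XX n j = - (XX n j * pd n i) := by
  apply LinearMap.ext; intro f; funext U
  simp only [Module.End.mul_apply, LinearMap.neg_apply, Pi.neg_apply, XX_apply, pd_apply]
  by_cases hi : i ∈ U
  · simp [hi, hij]
  by_cases hj : j ∈ U
  swap
  · simp [hi, hj, Ne.symm hij]
  have e : (insert i U).erase j = insert i (U.erase j) := by
    ext a; simp; constructor
    · tauto
    · rintro (rfl | h) <;> tauto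
  simp only [hi, hj, Finset.mem_erase, Finset.mem_insert, ne_eq, hij, Ne.symm hij,
    or_true, if_true, sg_erase n _ _ U hj, sg_insert n _ _ U hi, e, and_false, if_false]
  rcases lt_or_gt_of_ne hij with h | h
  · simp [h, h.not_gt]; ring
  · simp [h, h.not_gt]; ring

lemma car_PX_self (i : Fin n) : pd n i * XX n i = 1 - XX n i * pd n i := by
  apply LinearMap.ext; intro f; funext U
  simp only [Module.End.mul_apply, LinearMap.sub_apply, Pi.sub_apply, XX_apply, pd_apply,
    Module.End.one_apply]
  by_cases hi : i ∈ U
  · have := sg_erase n i i U hi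
    simp only [lt_irrefl, if_false] at this
    simp [hi, this, ← mul_assoc, sg_sq]
  · have := sg_insert n i i U hi
    simp only [lt_irrefl, if_false] at this
    simp [hi, this, ← mul_assoc, sg_sq]

lemma E_neg_mul (a b : E n) : -a * b = -(a * b) := by
  apply LinearMap.ext; intro f; rfl

lemma E_zero (a : E n) (h : a = -a) : a = 0 := by
  apply LinearMap.ext; intro f; funext U
  have := congrFun (LinearMap.congr_fun h f) U
  simp only [LinearMap.neg_apply, Pi.neg_apply] at this
  simpa using self_eq_neg.1 this

lemma P_AA (j : Fin n) (S : Finset (Fin n)) (h : j ∉ S) :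
    pd n j * AA n S = msign S.card • (AA n S * pd n j) := by
  induction S using Finset.induction_on with
  | empty => simp [AA_empty, msign]
  | insert i S hi ih =>
    have hj : j ∉ S := fun h' => h (Finset.mem_insert_of_mem h')
    have hji : j ≠ i := fun e => h (e ▸ Finset.mem_insert_self _ _)
    rw [AA_insert n i S hi, Finset.card_insert_of_notMem hi, mul_smul_comm, ← mul_assoc,
      car_PX_ne n j i hji, E_neg_mul, mul_assoc, ih hj]
    simp only [msign, pow_succ, mul_smul_comm, smul_mul_assoc, mul_assoc]
    module

lemma X_AA (j : Fin n) (S : Finset (Fin n)) :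
    XX n j * AA n S = msign S.card • (AA n S * XX n j) := by
  induction S using Finset.induction_on with
  | empty => simp [AA_empty, msign]
  | insert i S hi ih =>
    rw [AA_insert n i S hi, Finset.card_insert_of_notMem hi, mul_smul_comm, ← mul_assoc,
      car_XX n j i, E_neg_mul, mul_assoc, ih]
    simp only [msign, pow_succ, mul_smul_comm, smul_mul_assoc, mul_assoc]
    module

lemma XX_sq (i : Fin n) : XX n i * XX n i = 0 := by
  have := car_XX n i i
  exact E_zero n _ this

lemma PP_sq (i : Fin n) : pd n i * pd n i = 0 := E_zero n _ (car_PP n i i)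

lemma AA_mul_X (j : Fin n) (S : Finset (Fin n)) (h : j ∈ S) : AA n S * XX n j = 0 := by
  rw [← Finset.insert_erase h, AA_insert n j _ (Finset.notMem_erase j S), smul_mul_assoc,
    mul_assoc]
  have := X_AA n j (S.erase j)
  have h2 : XX n j * (AA n (S.erase j) * XX n j) = 0 := by
    rw [← mul_assoc, this, smul_mul_assoc, mul_assoc, XX_sq]; simp
  rw [h2, smul_zero]



/-! ## Parity and the super bracket -/

lemma zmod2 (a : ZMod 2) : a = 0 ∨ a = 1 := by revert a; decide

lemma sgn_zero : sgn 0 = 1 := by simp [sgn]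

lemma sgn_one : sgn 1 = -1 := by
  show (-1 : ℂ) ^ 1 = -1
  simp

lemma sgn_add (a b : ZMod 2) : sgn (a + b) = sgn a * sgn b := by
  rcases zmod2 a with rfl | rfl <;> rcases zmod2 b with rfl | rfl <;>
    simp [sgn_zero, sgn_one, show (1 + 1 : ZMod 2) = 0 from rfl]

lemma sgn_sq (a : ZMod 2) : sgn a * sgn a = 1 := by
  rcases zmod2 a with rfl | rfl <;> simp [sgn_zero, sgn_one]

lemma sgn_cast (k : ℕ) : sgn (k : ZMod 2) = msign k := by
  induction k with
  | zero => simp [sgn, msign]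
  | succ k ih => rw [Nat.cast_succ, sgn_add, ih, sgn_one, msign, msign, pow_succ]

lemma E_ext {D F : E n} (h : ∀ T, D (mono n T) = F (mono n T)) : D = F := by
  apply LinearMap.pi_ext'
  intro T
  apply LinearMap.ext_ring
  have e : (LinearMap.single ℂ (fun _ : Finset (Fin n) => ℂ) T) 1 = mono n T := by
    funext U; simp [mono, Pi.single_apply]
  rw [LinearMap.comp_apply, LinearMap.comp_apply, e]; exact h T

lemma mono_lpar (T : Finset (Fin n)) : mono n T ∈ lpar n (T.card : ZMod 2) := by
  intro S hS
  have : S ≠ T := by rintro rfl; exact hS rfl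
  simp [mono, this]

lemma par_lpar {q : ZMod 2} {f : Lambda n} (hf : f ∈ lpar n q) : par n f = sgn q • f := by
  funext S
  show msign S.card * f S = sgn q * f S
  by_cases h : (S.card : ZMod 2) = q
  · rw [← h, sgn_cast]
  · rw [hf S h]; simp

lemma par_conj {p : ZMod 2} {D : E n} (hD : D ∈ epar n p) : par n * D * par n = sgn p • D := by
  apply E_ext; intro T
  rw [Module.End.mul_apply, Module.End.mul_apply, par_lpar n (mono_lpar n T), map_smul, map_smul,
    par_lpar n (hD _ _ (mono_lpar n T)), smul_smul, sgn_add, ← mul_assoc, sgn_sq, one_mul,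
    LinearMap.smul_apply]

lemma epar_mul {p q : ZMod 2} {D F : E n} (hD : D ∈ epar n p) (hF : F ∈ epar n q) :
    D * F ∈ epar n (p + q) := by
  intro r f hf
  have := hD _ _ (hF r f hf)
  rwa [add_assoc, add_comm q p] at this

lemma epar_one : (1 : E n) ∈ epar n 0 := by
  intro r f hf; simpa using hf

lemma epar_P (i : Fin n) : pd n i ∈ epar n 1 := by
  intro r f hf S hS
  rw [pd_apply]
  split_ifs with h
  · rfl
  · rw [hf, mul_zero]
    rw [Finset.card_insert_of_notMem h]
    intro e; apply hS; rw [← e]; push_cast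
    rw [add_assoc, show (1 + 1 : ZMod 2) = 0 from rfl, add_zero]

lemma epar_X (i : Fin n) : XX n i ∈ epar n 1 := by
  intro r f hf S hS
  rw [XX_apply]
  split_ifs with h
  · rw [hf, mul_zero]
    intro e; apply hS; rw [← e]
    rw [← Finset.card_erase_add_one h]; push_cast; rfl
  · rfl

lemma epar_A (S : Finset (Fin n)) : AA n S ∈ epar n (S.card : ZMod 2) := by
  induction S using Finset.induction_on with
  | empty => rw [AA_empty]; simpa using epar_one n
  | insert i S hi ih =>
    rw [AA_insert n i S hi, Finset.card_insert_of_notMem hi]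
    apply Submodule.smul_mem
    have := epar_mul n (epar_X n i) ih
    push_cast
    rwa [add_comm] at this

lemma sb_hom {p q : ZMod 2} {D F : E n} (hD : D ∈ epar n p) (hF : F ∈ epar n q) :
    sbL n D F = D * F - sgn (p * q) • (F * D) := by
  show sbFun n D F = _
  unfold sbFun
  rw [par_conj n hD, par_conj n hF]
  rcases zmod2 p with rfl | rfl <;> rcases zmod2 q with rfl | rfl <;>
    simp only [mul_zero, zero_mul, mul_one, sgn_zero, sgn_one, one_smul, add_mul, sub_mul,
      mul_smul_comm, smul_mul_assoc] <;> module

lemma sb_even {D : E n} (hD : D ∈ epar n 0) (F : E n) : sbL n D F = D * F - F * D := by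
  show sbFun n D F = _
  unfold sbFun
  rw [par_conj n hD]
  simp only [sgn_zero, one_smul, add_mul, sub_mul]; module

lemma sb_mem {p q : ZMod 2} {D F : E n} (hD : D ∈ epar n p) (hF : F ∈ epar n q) :
    sbL n D F ∈ epar n (p + q) := by
  rw [sb_hom n hD hF]
  apply Submodule.sub_mem _ (epar_mul n hD hF)
  apply Submodule.smul_mem
  rw [add_comm]; exact epar_mul n hF hD

lemma sb_antisymm {p q : ZMod 2} {D F : E n} (hD : D ∈ epar n p) (hF : F ∈ epar n q) :
    sbL n D F = - (sgn (p * q) • sbL n F D) := by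
  rw [sb_hom n hD hF, sb_hom n hF hD, mul_comm q p, smul_sub, smul_smul, sgn_sq]
  module

lemma sb_jacobi {p q r : ZMod 2} {x y z : E n} (hx : x ∈ epar n p) (hy : y ∈ epar n q)
    (hz : z ∈ epar n r) :
    sbL n x (sbL n y z) = sbL n (sbL n x y) z + sgn (p * q) • sbL n y (sbL n x z) := by
  rw [sb_hom n hx (sb_mem n hy hz), sb_hom n (sb_mem n hx hy) hz, sb_hom n hy (sb_mem n hx hz),
    sb_hom n hx hy, sb_hom n hy hz, sb_hom n hx hz]
  simp only [mul_add, add_mul, sgn_add, mul_sub, sub_mul, mul_smul_comm, smul_mul_assoc,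
    smul_sub, smul_smul, mul_assoc, mul_comm q p]
  have h := sgn_sq (p * q)
  have h2 : ∀ a : ℂ, sgn (p * q) * (sgn (p * q) * a) = a := by
    intro a; rw [← mul_assoc, h, one_mul]
  simp only [h, h2]
  module

lemma epar_inter {D : E n} (h0 : D ∈ epar n 0) (h1 : D ∈ epar n 1) : D = 0 := by
  have a := par_conj n h0
  have b := par_conj n h1
  rw [a, sgn_zero, sgn_one] at b
  apply E_zero
  rw [one_smul] at b
  conv_lhs => rw [b]
  module



/-! ## Monomial vector fields and weights -/

/-- `x_S ∂_i` -/
def ee (S : Finset (Fin n)) (i : Fin n) : E n := AA n S * pd n i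

/-- `x_k ∂_k` -/
def NN (k : Fin n) : E n := XX n k * pd n k

/-- the `k`-th diagonal coordinate -/
def rho (k : Fin n) : E n →ₗ[ℂ] ℂ where
  toFun D := D (mono n {k}) {k}
  map_add' := by intro x y; rfl
  map_smul' := by intro c x; rfl

/-- the weight of `x_S ∂_i` -/
def ww (S : Finset (Fin n)) (i : Fin n) : E n →ₗ[ℂ] ℂ := (∑ k ∈ S, rho n k) - rho n i

lemma ww_apply (S : Finset (Fin n)) (i : Fin n) (h : E n) :
    ww n S i h = ∑ k ∈ S, rho n k h - rho n i h := by
  simp [ww, LinearMap.sum_apply]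

lemma NN_apply (k : Fin n) (f : Lambda n) (U : Finset (Fin n)) :
    NN n k f U = if k ∈ U then f U else 0 := by
  unfold NN
  rw [Module.End.mul_apply, XX_apply]
  split_ifs with h
  · have := sg_erase n k k U h
    simp only [lt_irrefl, if_false] at this
    rw [pd_apply, if_neg (Finset.notMem_erase k U), Finset.insert_erase h, this, ← mul_assoc,
      sg_sq, one_mul]
  · rfl

lemma rho_NN (k l : Fin n) : rho n k (NN n l) = if l = k then 1 else 0 := by
  show NN n l (mono n {k}) {k} = _
  rw [NN_apply]; simp [mono]

lemma ww_NN (S : Finset (Fin n)) (i k : Fin n) :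
    ww n S i (NN n k) = (if k ∈ S then 1 else 0) - (if k = i then 1 else 0) := by
  rw [ww_apply, rho_NN]
  simp [rho_NN]

lemma diag_even {h : E n} (hh : h ∈ diagSpan n) : h ∈ epar n 0 := by
  unfold diagSpan at hh
  induction hh using Submodule.span_induction with
  | mem x hx =>
    obtain ⟨i, rfl⟩ := hx
    have := epar_mul n (epar_X n i) (epar_P n i)
    exact this
  | zero => exact Submodule.zero_mem _
  | add x y _ _ hx hy => exact Submodule.add_mem _ hx hy
  | smul a x _ hx => exact Submodule.smul_mem _ _ hx

lemma diag_apply {h : E n} (hh : h ∈ diagSpan n) (f : Lambda n) (U : Finset (Fin n)) :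
    h f U = (∑ k ∈ U, rho n k h) * f U := by
  unfold diagSpan at hh
  induction hh using Submodule.span_induction with
  | mem x hx =>
    obtain ⟨i, rfl⟩ := hx
    show NN n i f U = (∑ k ∈ U, rho n k (NN n i)) * f U
    rw [NN_apply]; simp [rho_NN]
  | zero => simp
  | add x y _ _ hx hy =>
    simp only [LinearMap.add_apply, Pi.add_apply, map_add, Finset.sum_add_distrib, hx, hy]; ring
  | smul a x _ hx =>
    simp only [LinearMap.smul_apply, Pi.smul_apply, map_smul, smul_eq_mul, ← Finset.mul_sum, hx]
    ring

lemma ee_apply (S : Finset (Fin n)) (i : Fin n) (f : Lambda n) (U : Finset (Fin n)) :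
    ee n S i f U = if S ⊆ U then msign (inversions n S (U \ S)) *
      (if i ∈ U \ S then 0 else sg n i (U \ S) * f (insert i (U \ S))) else 0 := by
  unfold ee
  rw [Module.End.mul_apply, AA_apply]; rfl

lemma sb_diag {h : E n} (hh : h ∈ diagSpan n) (S : Finset (Fin n)) (i : Fin n) :
    sbL n h (ee n S i) = ww n S i h • ee n S i := by
  rw [sb_even n (diag_even n hh)]
  apply LinearMap.ext; intro f; funext U
  rw [LinearMap.sub_apply, Pi.sub_apply, LinearMap.smul_apply, Pi.smul_apply,
    Module.End.mul_apply, Module.End.mul_apply, diag_apply n hh, ee_apply, ee_apply, smul_eq_mul,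
    ww_apply]
  by_cases hS : S ⊆ U
  · by_cases hi : i ∈ U \ S
    · simp only [hi, if_true, hS]; simp
    · simp only [hi, if_false, hS, if_true]
      rw [diag_apply n hh, Finset.sum_insert hi, ← Finset.sum_sdiff hS]
      ring
  · simp [hS]

lemma diag_coef {h : E n} (hh : h ∈ diagSpan n) (D : E n) (S : Finset (Fin n)) (i : Fin n) :
    sbL n h D (mono n {i}) S = ww n S i h * D (mono n {i}) S := by
  rw [sb_even n (diag_even n hh), LinearMap.sub_apply, Pi.sub_apply,
    Module.End.mul_apply, Module.End.mul_apply, diag_apply n hh]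
  have : h (mono n {i}) = rho n i h • mono n {i} := by
    funext U
    rw [diag_apply n hh, Pi.smul_apply, smul_eq_mul]
    by_cases hU : U = {i}
    · subst hU; simp
    · simp [mono, hU]
  rw [this, map_smul, Pi.smul_apply, smul_eq_mul, ww_apply]; ring

lemma pd_mono (i : Fin n) (T : Finset (Fin n)) (h : i ∉ T) : pd n i (mono n T) = 0 := by
  funext U
  rw [pd_apply]
  split_ifs
  · rfl
  · have : insert i U ≠ T := by rintro rfl; exact h (Finset.mem_insert_self _ _)
    simp [mono, this]

lemma XX_mono (i : Fin n) (T : Finset (Fin n)) (h : i ∉ T) :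
    XX n i (mono n T) = sg n i T • mono n (insert i T) := by
  funext U
  rw [XX_apply, Pi.smul_apply, smul_eq_mul]
  by_cases hU : U = insert i T
  · subst hU
    have := sg_insert n i i T h
    simp only [lt_irrefl, if_false] at this
    simp [mono, this, Finset.erase_insert h]
  · split_ifs with h1
    · have : U.erase i ≠ T := by rintro rfl; exact hU (Finset.insert_erase h1).symm
      simp [mono, hU, this]
    · simp [mono, hU]

lemma pd_XX_mono (i : Fin n) (T : Finset (Fin n)) (h : i ∉ T) :
    pd n i (XX n i (mono n T)) = mono n T := by
  have := LinearMap.congr_fun (car_PX_self n i) (mono n T)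
  simp only [Module.End.mul_apply, LinearMap.sub_apply, Module.End.one_apply,
    pd_mono n i T h, map_zero, sub_zero] at this
  exact this

lemma pd_mono_insert (i : Fin n) (T : Finset (Fin n)) (h : i ∉ T) :
    pd n i (mono n (insert i T)) = sg n i T • mono n T := by
  have h1 : mono n (insert i T) = sg n i T • XX n i (mono n T) := by
    rw [XX_mono n i T h, smul_smul, sg_sq, one_smul]
  rw [h1, map_smul, pd_XX_mono n i T h]

lemma mulOp_one (f : Lambda n) : mulOp n f (mono n ∅) = f := by
  funext U
  show lmulFun n f (mono n ∅) U = _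
  unfold lmulFun mono
  rw [Finset.sum_eq_single U]
  · simp [inversions, msign]
  · intro b hb hbU
    have : U \ b ≠ ∅ := by
      intro e; apply hbU
      exact Finset.Subset.antisymm (Finset.mem_powerset.1 hb) (Finset.sdiff_eq_empty_iff_subset.1 e)
    simp [this]
  · intro h; exact absurd (Finset.mem_powerset_self U) h

lemma pd_single (i j : Fin n) : pd n i (mono n {j}) = if i = j then mono n ∅ else 0 := by
  split_ifs with h
  · subst h
    have := pd_mono_insert n i ∅ (by simp)
    simpa [sg, msign] using this
  · exact pd_mono n i {j} (by simpa using h)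

lemma ee_single (S : Finset (Fin n)) (i j : Fin n) :
    ee n S i (mono n {j}) = if i = j then mono n S else 0 := by
  unfold ee
  rw [Module.End.mul_apply, pd_single]
  split_ifs
  · exact mulOp_one n _
  · simp

lemma Wmap_apply (F : Fin n → Lambda n) (i : Fin n) : Wmap n F (mono n {i}) = F i := by
  show (∑ k, mulOp n (F k) * pd n k) (mono n {i}) = _
  rw [LinearMap.sum_apply, Finset.sum_eq_single i]
  · rw [Module.End.mul_apply, pd_single, if_pos rfl, mulOp_one]
  · intro b _ hb
    rw [Module.End.mul_apply, pd_single, if_neg hb, map_zero]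
  · intro h; exact absurd (Finset.mem_univ i) h

lemma mono_sum (f : Lambda n) : f = ∑ S, f S • mono n S := by
  funext U
  simp [mono, Finset.sum_apply]

lemma Wmap_single (i : Fin n) (g : Lambda n) : Wmap n (Pi.single i g) = mulOp n g * pd n i := by
  show ∑ k, mulOp n ((Pi.single i g : Fin n → Lambda n) k) * pd n k = _
  rw [Finset.sum_eq_single i]
  · simp
  · intro b _ hb; simp [Pi.single_eq_of_ne hb]
  · intro h; exact absurd (Finset.mem_univ i) h

lemma Wmap_expand (F : Fin n → Lambda n) : Wmap n F = ∑ i, ∑ S, F i S • ee n S i := by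
  show ∑ k, mulOp n (F k) * pd n k = _
  apply Finset.sum_congr rfl; intro i _
  conv_lhs => rw [mono_sum n (F i)]
  rw [map_sum, Finset.sum_mul]
  apply Finset.sum_congr rfl; intro S _
  rw [map_smul, smul_mul_assoc]; rfl

lemma Wn_expand {D : E n} (hD : D ∈ Wn n) : D = ∑ i, ∑ S, D (mono n {i}) S • ee n S i := by
  obtain ⟨F, rfl⟩ := hD
  simp only [Wmap_apply]
  exact Wmap_expand n F

lemma Wn_unique {D : E n} (hD : D ∈ Wn n) (A : Finset (Fin n)) (a : Fin n)
    (h : ∀ S i, ¬ (S = A ∧ i = a) → D (mono n {i}) S = 0) :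
    D = D (mono n {a}) A • ee n A a := by
  conv_lhs => rw [Wn_expand n hD]
  rw [Finset.sum_eq_single a, Finset.sum_eq_single A]
  · intro S _ hS; rw [h S a (fun h => hS h.1), zero_smul]
  · intro h; exact absurd (Finset.mem_univ _) h
  · intro i _ hi
    apply Finset.sum_eq_zero; intro S _
    rw [h S i (fun h => hi h.2), zero_smul]
  · intro h; exact absurd (Finset.mem_univ _) h



/-! ## Spanning sets -/

/-- `x_i x_T ∂_i - x_j x_T ∂_j` -/
def bb (T : Finset (Fin n)) (i j : Fin n) : E n := XX n i * AA n T * pd n i - XX n j * AA n T * pd n j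

/-- coefficient tuple of `bb` -/
def cc (T : Finset (Fin n)) (i j : Fin n) : Fin n → Lambda n :=
  Pi.single i (XX n i (mono n T)) - Pi.single j (XX n j (mono n T))

lemma div_single (i : Fin n) (g : Lambda n) : divMap n (Pi.single i g) = pd n i g := by
  show ∑ k, pd n k ((Pi.single i g : Fin n → Lambda n) k) = _
  rw [Finset.sum_eq_single i]
  · simp
  · intro b _ hb; simp [Pi.single_eq_of_ne hb]
  · intro h; exact absurd (Finset.mem_univ i) h

lemma single_divFree (S : Finset (Fin n)) (j : Fin n) (h : j ∉ S) :
    (Pi.single j (mono n S) : Fin n → Lambda n) ∈ divFree n := by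
  show divMap n _ = 0
  rw [div_single, pd_mono n j S h]

lemma cc_divFree (T : Finset (Fin n)) (i j : Fin n) (hi : i ∉ T) (hj : j ∉ T) :
    cc n T i j ∈ divFree n := by
  show divMap n _ = 0
  unfold cc
  rw [map_sub, div_single, div_single, pd_XX_mono n i T hi, pd_XX_mono n j T hj, sub_self]

/-- spanning set of the divergence free tuples -/
def dfSet : Set (Fin n → Lambda n) :=
  {F | (∃ S j, j ∉ S ∧ F = Pi.single j (mono n S)) ∨
    ∃ T i j, i ≠ j ∧ i ∉ T ∧ j ∉ T ∧ F = cc n T i j}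

lemma divFree_le : divFree n ≤ Submodule.span ℂ (dfSet n) := by
  intro F hF
  have hdiv : ∑ i, pd n i (F i) = 0 := hF
  have e1 : F = (∑ i, ∑ S, (pd n i (XX n i (F i))) S • (Pi.single i (mono n S) : Fin n → Lambda n))
      + ∑ T, ∑ i, (pd n i (F i)) T • (Pi.single i (XX n i (mono n T)) : Fin n → Lambda n) := by
    have e2 : F = ∑ i, Pi.single i (F i) := (Finset.univ_sum_single F).symm
    rw [Finset.sum_comm (s := (Finset.univ : Finset (Finset (Fin n)))), ← Finset.sum_add_distrib]
    conv_lhs => rw [e2]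
    apply Finset.sum_congr rfl; intro i _
    have e3 : F i = pd n i (XX n i (F i)) + XX n i (pd n i (F i)) := by
      have := LinearMap.congr_fun (car_PX_self n i) (F i)
      simp only [Module.End.mul_apply, LinearMap.sub_apply, Module.End.one_apply] at this
      rw [this]; simp
    have e4 : ∀ g : Lambda n, (Pi.single i g : Fin n → Lambda n)
        = ∑ S, g S • (Pi.single i (mono n S) : Fin n → Lambda n) := by
      intro g
      conv_lhs => rw [mono_sum n g]
      have := map_sum (LinearMap.single ℂ (fun _ : Fin n => Lambda n) i)
        (fun S => g S • mono n S) Finset.univ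
      simpa only [LinearMap.coe_single, map_smul] using this
    have e5 : ∀ g : Lambda n, (Pi.single i (XX n i g) : Fin n → Lambda n)
        = ∑ S, g S • (Pi.single i (XX n i (mono n S)) : Fin n → Lambda n) := by
      intro g
      conv_lhs => rw [mono_sum n g]
      have := map_sum (LinearMap.single ℂ (fun _ : Fin n => Lambda n) i ∘ₗ (XX n i))
        (fun S => g S • mono n S) Finset.univ
      simpa only [LinearMap.coe_single, map_smul, LinearMap.comp_apply] using this
    rw [← e4, ← e5, ← Pi.single_add, ← e3]
  rw [e1]
  apply Submodule.add_mem
  · apply Submodule.sum_mem; intro i _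
    apply Submodule.sum_mem; intro S _
    by_cases h : i ∈ S
    · rw [pd_apply, if_pos h, zero_smul]; exact Submodule.zero_mem _
    · exact Submodule.smul_mem _ _ (Submodule.subset_span (Or.inl ⟨S, i, h, rfl⟩))
  · apply Submodule.sum_mem; intro T _
    have hz : ∑ i, pd n i (F i) T = 0 := by
      have := congrFun hdiv T
      simpa [Finset.sum_apply] using this
    have hout : ∀ i ∈ T, pd n i (F i) T = 0 := by
      intro i hi; rw [pd_apply, if_pos hi]
    by_cases hT : ∃ j, j ∉ T
    · obtain ⟨j, hj⟩ := hT
      have e6 : ∑ i, (pd n i (F i)) T • (Pi.single i (XX n i (mono n T)) : Fin n → Lambda n)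
          = ∑ i, (pd n i (F i)) T • cc n T i j := by
        unfold cc
        simp only [smul_sub, Finset.sum_sub_distrib]
        rw [← Finset.sum_smul, hz, zero_smul, sub_zero]
      rw [e6]
      apply Submodule.sum_mem; intro i _
      by_cases hi : i ∈ T
      · rw [hout i hi, zero_smul]; exact Submodule.zero_mem _
      · by_cases hij : i = j
        · subst hij; unfold cc; rw [sub_self, smul_zero]; exact Submodule.zero_mem _
        · exact Submodule.smul_mem _ _ (Submodule.subset_span (Or.inr ⟨T, i, j, hij, hi, hj, rfl⟩))
    · push Not at hT
      apply Submodule.sum_mem; intro i _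
      rw [hout i (hT i), zero_smul]; exact Submodule.zero_mem _

/-- degree `-1` elements -/
def dd (t : CT) (k : Fin n) : E n := if t = CT.St then ee n ∅ k - ee n Finset.univ k else ee n ∅ k

lemma mulOp_XX_mono (i : Fin n) (T : Finset (Fin n)) (h : i ∉ T) :
    mulOp n (XX n i (mono n T)) = XX n i * AA n T := by
  rw [XX_mono n i T h, XX_AA n i T h, map_smul]; rfl

lemma Wmap_single_mono (S : Finset (Fin n)) (j : Fin n) :
    Wmap n (Pi.single j (mono n S)) = ee n S j := Wmap_single n j _

lemma Wmap_cc (T : Finset (Fin n)) (i j : Fin n) (hi : i ∉ T) (hj : j ∉ T) :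
    Wmap n (cc n T i j) = bb n T i j := by
  unfold cc bb
  rw [map_sub, Wmap_single, Wmap_single, mulOp_XX_mono n i T hi, mulOp_XX_mono n j T hj]

lemma AA_univ_mono (S : Finset (Fin n)) (h : S.Nonempty) : AA n Finset.univ (mono n S) = 0 := by
  obtain ⟨k, hk⟩ := h
  have h1 : mono n S = sg n k (S.erase k) • XX n k (mono n (S.erase k)) := by
    rw [XX_mono n k _ (Finset.notMem_erase k S), smul_smul, sg_sq, one_smul,
      Finset.insert_erase hk]
  have h2 := LinearMap.congr_fun (AA_mul_X n k Finset.univ (Finset.mem_univ k))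
    (mono n (S.erase k))
  rw [Module.End.mul_apply] at h2
  rw [h1, map_smul, h2]; simp

lemma oneM_apply (f : Lambda n) : mulOp n (oneM n) f = f - AA n Finset.univ f := by
  unfold oneM omegaTop
  rw [map_sub, LinearMap.sub_apply]
  change AA n ∅ f - _ = _
  rw [AA_empty]; rfl

lemma oneMScale_single (j : Fin n) (g : Lambda n) :
    oneMScale n (Pi.single j g) = Pi.single j (g - AA n Finset.univ g) := by
  funext i
  show mulOp n (oneM n) ((Pi.single j g : Fin n → Lambda n) i) = _
  by_cases h : i = j
  · subst h; simp [oneM_apply]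
  · simp [Pi.single_eq_of_ne h]

lemma scale_single (S : Finset (Fin n)) (j : Fin n) (h : S.Nonempty) :
    oneMScale n (Pi.single j (mono n S)) = Pi.single j (mono n S) := by
  rw [oneMScale_single, AA_univ_mono n S h, sub_zero]

lemma scale_cc (T : Finset (Fin n)) (i j : Fin n) (hi : i ∉ T) (hj : j ∉ T) :
    oneMScale n (cc n T i j) = cc n T i j := by
  have h2 : ∀ k : Fin n, AA n Finset.univ (XX n k (mono n T)) = 0 := by
    intro k
    have h2 := LinearMap.congr_fun (AA_mul_X n k Finset.univ (Finset.mem_univ k)) (mono n T)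
    rw [Module.End.mul_apply] at h2
    rw [h2]; simp
  unfold cc
  rw [map_sub, oneMScale_single, oneMScale_single, h2, h2, sub_zero, sub_zero]

lemma scale_empty (k : Fin n) :
    Wmap n (oneMScale n (Pi.single k (mono n ∅))) = ee n ∅ k - ee n Finset.univ k := by
  rw [oneMScale_single, Wmap_single, map_sub, sub_mul]
  have : AA n Finset.univ (mono n ∅) = mono n Finset.univ := mulOp_one n _
  rw [this]; rfl

/-- the families considered -/
def okT (t : CT) : Prop := t = CT.W ∨ t = CT.S ∨ t = CT.St

lemma alg_le_Wn {t : CT} (ht : okT t) : t.algebra n ≤ Wn n := by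
  rcases ht with rfl | rfl | rfl
  · exact le_refl _
  · rintro x ⟨F, _, rfl⟩; exact ⟨F, rfl⟩
  · rintro x ⟨F, _, rfl⟩; exact ⟨oneMScale n F, rfl⟩

lemma ee_mem {t : CT} (ht : okT t) (S : Finset (Fin n)) (j : Fin n) (hS : S.Nonempty)
    (hj : j ∉ S) : ee n S j ∈ t.algebra n := by
  rcases ht with rfl | rfl | rfl
  · exact ⟨_, Wmap_single_mono n S j⟩
  · exact ⟨_, single_divFree n S j hj, Wmap_single_mono n S j⟩
  · refine ⟨_, single_divFree n S j hj, ?_⟩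
    rw [LinearMap.comp_apply, scale_single n S j hS]
    exact Wmap_single_mono n S j

lemma bb_mem {t : CT} (ht : okT t) (T : Finset (Fin n)) (i j : Fin n) (hi : i ∉ T)
    (hj : j ∉ T) : bb n T i j ∈ t.algebra n := by
  rcases ht with rfl | rfl | rfl
  · exact ⟨_, Wmap_cc n T i j hi hj⟩
  · exact ⟨_, cc_divFree n T i j hi hj, Wmap_cc n T i j hi hj⟩
  · refine ⟨_, cc_divFree n T i j hi hj, ?_⟩
    rw [LinearMap.comp_apply, scale_cc n T i j hi hj]
    exact Wmap_cc n T i j hi hj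

lemma dd_mem {t : CT} (ht : okT t) (k : Fin n) : dd n t k ∈ t.algebra n := by
  rcases ht with rfl | rfl | rfl
  · exact ⟨_, Wmap_single_mono n ∅ k⟩
  · exact ⟨_, single_divFree n ∅ k (by simp), Wmap_single_mono n ∅ k⟩
  · refine ⟨_, single_divFree n ∅ k (by simp), ?_⟩
    rw [LinearMap.comp_apply, scale_empty]; rfl

/-- spanning set -/
def spS (t : CT) : Set (E n) :=
  {x | (∃ S j, S.Nonempty ∧ j ∉ S ∧ x = ee n S j) ∨ (∃ k, x = dd n t k) ∨
    (∃ T i j, i ≠ j ∧ i ∉ T ∧ j ∉ T ∧ x = bb n T i j) ∨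
    (t = CT.W ∧ ∃ S i, x = ee n S i)}

lemma alg_le_span {t : CT} (ht : okT t) : t.algebra n ≤ Submodule.span ℂ (spS n t) := by
  rcases ht with rfl | rfl | rfl
  · intro x hx
    rw [Wn_expand n hx]
    apply Submodule.sum_mem; intro i _
    apply Submodule.sum_mem; intro S _
    exact Submodule.smul_mem _ _ (Submodule.subset_span (Or.inr (Or.inr (Or.inr ⟨rfl, S, i, rfl⟩))))
  · show (divFree n).map (Wmap n) ≤ _
    refine (Submodule.map_mono (divFree_le n)).trans ?_
    rw [Submodule.map_span, Submodule.span_le]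
    rintro _ ⟨F, hF | hF, rfl⟩
    · obtain ⟨S, j, hj, rfl⟩ := hF
      apply Submodule.subset_span
      rw [Wmap_single_mono]
      rcases S.eq_empty_or_nonempty with rfl | hS
      · exact Or.inr (Or.inl ⟨j, rfl⟩)
      · exact Or.inl ⟨S, j, hS, hj, rfl⟩
    · obtain ⟨T, i, j, hij, hi, hj, rfl⟩ := hF
      apply Submodule.subset_span
      exact Or.inr (Or.inr (Or.inl ⟨T, i, j, hij, hi, hj, Wmap_cc n T i j hi hj⟩))
  · show (divFree n).map (Wmap n ∘ₗ oneMScale n) ≤ _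
    refine (Submodule.map_mono (divFree_le n)).trans ?_
    rw [Submodule.map_span, Submodule.span_le]
    rintro _ ⟨F, hF | hF, rfl⟩
    · obtain ⟨S, j, hj, rfl⟩ := hF
      apply Submodule.subset_span
      rw [LinearMap.comp_apply]
      rcases S.eq_empty_or_nonempty with rfl | hS
      · refine Or.inr (Or.inl ⟨j, ?_⟩)
        rw [scale_empty]; rfl
      · refine Or.inl ⟨S, j, hS, hj, ?_⟩
        rw [scale_single n S j hS, Wmap_single_mono]
    · obtain ⟨T, i, j, hij, hi, hj, rfl⟩ := hF
      apply Submodule.subset_span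
      refine Or.inr (Or.inr (Or.inl ⟨T, i, j, hij, hi, hj, ?_⟩))
      rw [LinearMap.comp_apply, scale_cc n T i j hi hj, Wmap_cc n T i j hi hj]



/-! ## Homogeneous weight vectors and the core argument -/

/-- homogeneous weight vectors of `L` -/
def IsHW (t : CT) (x : E n) : Prop :=
  x ∈ t.algebra n ∧ (∃ α, x ∈ epar n α) ∧ ∃ η, x ∈ wtsp t n (t.algebra n) η

/-- homogeneous root vectors spanning their root space -/
def Good (t : CT) (g : E n) : Prop :=
  g ∈ t.algebra n ∧ (∃ α, g ∈ epar n α) ∧ ∃ β, g ∈ wtsp t n (t.algebra n) β ∧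
    (∃ h : t.cartan n, β h ≠ 0) ∧ ∀ y ∈ wtsp t n (t.algebra n) β, ∃ c : ℂ, y = c • g

lemma Good.isHW {t : CT} {g : E n} (h : Good n t g) : IsHW n t g := by
  obtain ⟨h1, h2, β, h3, _⟩ := h
  exact ⟨h1, h2, β, h3⟩

lemma cartan_wt {t : CT} (h : t.cartan n) : (h : E n) ∈ wtsp t n (t.algebra n) 0 := by
  refine ⟨h.2.1, fun h' => ?_⟩
  rw [sb_even n (diag_even n h'.2.2)]
  have : (h' : E n) * (h : E n) = h * h' := by
    apply LinearMap.ext; intro f; funext U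
    rw [Module.End.mul_apply, Module.End.mul_apply, diag_apply n h'.2.2, diag_apply n h.2.2,
      diag_apply n h.2.2, diag_apply n h'.2.2]
    ring
  rw [this, sub_self]; simp

lemma scalar_zero {t : CT} {pf : ZMod 2} {g z : E n} {α : ZMod 2} (hg : g ∈ epar n α)
    (hz : z ∈ epar n (α + pf)) (c : ℂ) (h : z = c • g) :
    ∃ c' : ℂ, z = c' • g ∧ (pf = 1 → c' = 0) := by
  by_cases hp : pf = 1
  · refine ⟨0, ?_, fun _ => rfl⟩
    have hz' : z ∈ epar n α := h ▸ Submodule.smul_mem _ c hg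
    rw [zero_smul]
    subst hp
    rcases zmod2 α with rfl | rfl
    · exact epar_inter n hz' (by simpa using hz)
    · exact epar_inter n (by simpa [show (1 + 1 : ZMod 2) = 0 from rfl] using hz) hz'
  · exact ⟨c, h, fun h' => absurd h' hp⟩

section core

variable {n} {t : CT} {pf : ZMod 2} {f : E n →ₗ[ℂ] E n →ₗ[ℂ] E n}

lemma core_right (hf : IsSuperBider n (t.algebra n) pf f) (hw : t.HasWeight n f 0)
    (hsp : t.algebra n ≤ Submodule.span ℂ {x | IsHW n t x}) {g : E n} (hg : Good n t g) :
    ∃ lam : ℂ, (pf = 1 → lam = 0) ∧ ∀ x ∈ t.algebra n, f x g = lam • sbL n x g := by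
  obtain ⟨hgL, ⟨γ, hγ⟩, β, hβ, ⟨h, hh⟩, huniq⟩ := hg
  have hh0 := diag_even n h.2.2
  have h1 : f h g ∈ wtsp t n (t.algebra n) β := by
    have := hw 0 β h (cartan_wt n h) g hβ
    simpa using this
  obtain ⟨c0, hc0⟩ := huniq _ h1
  have h2 : f h g ∈ epar n (γ + pf) := by
    have := (hf.maps 0 γ h ⟨h.2.1, hh0⟩ g ⟨hgL, hγ⟩).2
    simpa using this
  obtain ⟨c, hc, hcp⟩ := scalar_zero (t := t) n hγ h2 c0 hc0
  refine ⟨c / β h, fun hp => by rw [hcp hp, zero_div], fun x hx => ?_⟩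
  have hx' := hsp hx
  clear hx
  induction hx' using Submodule.span_induction with
  | mem x hx =>
    obtain ⟨hxL, ⟨α, hα⟩, η, hη⟩ := hx
    have e := hf.eq1 0 α γ h ⟨h.2.1, hh0⟩ x ⟨hxL, hα⟩ g ⟨hgL, hγ⟩
    have h3 := (hw η β x hη g hβ).2 h
    rw [hη.2 h, h3, hc, map_smul, map_smul, LinearMap.smul_apply, LinearMap.smul_apply,
      sb_antisymm n hγ hα, mul_comm γ α] at e
    simp only [zero_mul, sgn_zero, one_smul, zero_add, LinearMap.add_apply, smul_neg, smul_smul]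
      at e
    rw [show sgn (α * γ) * (c * sgn (α * γ)) = c by
      rw [mul_comm c, ← mul_assoc, sgn_sq, one_mul], one_mul, add_smul] at e
    have e2 : β h • f x g = c • sbL n x g := by
      have e3 : η h • f x g + c • sbL n x g = η h • f x g + β h • f x g := by
        conv_lhs => rw [e]
        simp
      exact (add_left_cancel e3).symm
    rw [div_eq_inv_mul, mul_smul, ← e2, smul_smul, inv_mul_cancel₀ hh, one_smul]
  | zero => simp
  | add x y _ _ hx hy => simp only [map_add, LinearMap.add_apply, hx, hy, smul_add]
  | smul a x _ hx => simp only [map_smul, LinearMap.smul_apply, hx]; rw [smul_comm]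

lemma core_left (hf : IsSuperBider n (t.algebra n) pf f) (hw : t.HasWeight n f 0)
    (hsp : t.algebra n ≤ Submodule.span ℂ {x | IsHW n t x}) {g : E n} (hg : Good n t g) :
    ∃ lam : ℂ, ∀ x ∈ t.algebra n, f g x = lam • sbL n g x := by
  obtain ⟨hgL, ⟨γ, hγ⟩, β, hβ, ⟨h, hh⟩, huniq⟩ := hg
  have hh0 := diag_even n h.2.2
  have h1 : f g h ∈ wtsp t n (t.algebra n) β := by
    have := hw β 0 g hβ h (cartan_wt n h)
    simpa using this
  obtain ⟨c, hc⟩ := huniq _ h1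
  refine ⟨-c / β h, fun x hx => ?_⟩
  have hx' := hsp hx
  clear hx
  induction hx' using Submodule.span_induction with
  | mem x hx =>
    obtain ⟨hxL, ⟨α, hα⟩, η, hη⟩ := hx
    have e := hf.eq2 γ 0 α g ⟨hgL, hγ⟩ h ⟨h.2.1, hh0⟩ x ⟨hxL, hα⟩
    have h3 := (hw β η g hβ x hη).2 h
    rw [hη.2 h, h3, hc, map_smul, map_smul, LinearMap.smul_apply] at e
    simp only [mul_zero, sgn_zero, one_smul, zero_add, LinearMap.add_apply] at e
    rw [add_smul] at e
    have e2 : β h • f g x = (-c) • sbL n g x := by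
      have e3 : η h • f g x + (-c) • sbL n g x = η h • f g x + β h • f g x := by
        conv_lhs => rw [e]
        module
      exact (add_left_cancel e3).symm
    rw [div_eq_inv_mul, mul_smul, ← e2, smul_smul, inv_mul_cancel₀ hh, one_smul]
  | zero => simp
  | add x y _ _ hx hy => simp only [map_add, hx, hy, smul_add]
  | smul a x _ hx => simp only [map_smul, hx]; rw [smul_comm]

/-- closure of the set of `y` with `f(x,y) = λ[x,y]` under brackets -/
lemma M_closed (hf : IsSuperBider n (t.algebra n) pf f)
    (hsp : t.algebra n ≤ Submodule.span ℂ {x | IsHW n t x}) {lam : ℂ} (hl : pf = 1 → lam = 0)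
    {y z : E n} (hyL : y ∈ t.algebra n) (hzL : z ∈ t.algebra n) {β γ : ZMod 2}
    (hy : y ∈ epar n β) (hz : z ∈ epar n γ)
    (h1 : ∀ x ∈ t.algebra n, f x y = lam • sbL n x y)
    (h2 : ∀ x ∈ t.algebra n, f x z = lam • sbL n x z) :
    ∀ x ∈ t.algebra n, f x (sbL n y z) = lam • sbL n x (sbL n y z) := by
  intro x hx
  have hx' := hsp hx
  clear hx
  induction hx' using Submodule.span_induction with
  | mem x hx =>
    obtain ⟨hxL, ⟨α, hα⟩, η, hη⟩ := hx
    rw [hf.eq2 α β γ x ⟨hxL, hα⟩ y ⟨hyL, hy⟩ z ⟨hzL, hz⟩, h1 x hxL, h2 x hxL]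
    rcases zmod2 pf with rfl | hp
    · rw [sb_jacobi n hα hy hz, zero_add, map_smul, map_smul, LinearMap.smul_apply, smul_add,
        smul_comm]
    · rw [hl hp]; simp
  | zero => simp
  | add x y _ _ hx hy => simp only [map_add, LinearMap.add_apply, hx, hy, smul_add]
  | smul a x _ hx => simp only [map_smul, LinearMap.smul_apply, hx]; rw [smul_comm]

end core



/-! ## The root vectors -/

lemma ee_par (S : Finset (Fin n)) (i : Fin n) : ee n S i ∈ epar n ((S.card : ZMod 2) + 1) :=
  epar_mul n (epar_A n S) (epar_P n i)

lemma bb_par (T : Finset (Fin n)) (i j : Fin n) :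
    bb n T i j ∈ epar n (1 + (T.card : ZMod 2) + 1) :=
  Submodule.sub_mem _ (epar_mul n (epar_mul n (epar_X n i) (epar_A n T)) (epar_P n i))
    (epar_mul n (epar_mul n (epar_X n j) (epar_A n T)) (epar_P n j))

lemma dd_par {t : CT} (hev : t = CT.St → Even n) (k : Fin n) : dd n t k ∈ epar n 1 := by
  have h0 : ee n ∅ k ∈ epar n 1 := by simpa using ee_par n ∅ k
  unfold dd
  split_ifs with h
  · apply Submodule.sub_mem _ h0
    have := ee_par n Finset.univ k
    have h2 : ((n : ℕ) : ZMod 2) = 0 := (ZMod.natCast_eq_zero_iff_even).2 (hev h)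
    simpa [h2] using this
  · exact h0

/-- weight of `x_S ∂_i` as a functional on the Cartan subalgebra -/
def wt (t : CT) (S : Finset (Fin n)) (i : Fin n) : Module.Dual ℂ (t.cartan n) :=
  ww n S i ∘ₗ (t.cartan n).subtype

lemma wt_apply (t : CT) (S : Finset (Fin n)) (i : Fin n) (h : t.cartan n) :
    wt n t S i h = ww n S i h := rfl

lemma ee_wt {t : CT} (S : Finset (Fin n)) (i : Fin n) (h : ee n S i ∈ t.algebra n) :
    ee n S i ∈ wtsp t n (t.algebra n) (wt n t S i) :=
  ⟨h, fun h' => sb_diag n h'.2.2 S i⟩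

lemma AA_univ_apply (f : Lambda n) (U : Finset (Fin n)) (h : U ≠ Finset.univ) :
    AA n Finset.univ f U = 0 := by
  rw [AA_apply, if_neg]
  intro h'; exact h (Finset.univ_subset_iff.1 h')

lemma univ_apply (f : Lambda n) : AA n Finset.univ f Finset.univ = f ∅ := by
  rw [AA_apply]; simp [inversions, msign]

lemma St_coef (F : Fin n → Lambda n) (k : Fin n) :
    (Wmap n ∘ₗ oneMScale n) F (mono n {k}) = F k - AA n Finset.univ (F k) := by
  rw [LinearMap.comp_apply, Wmap_apply, ← oneM_apply]; rfl

lemma St_trace (hn : 4 ≤ n) {h : E n} (hh : h ∈ Stn n) : ∑ k, rho n k h = 0 := by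
  obtain ⟨F, hF, rfl⟩ := hh
  have hdiv : ∑ i, pd n i (F i) = 0 := hF
  have := congrFun hdiv ∅
  rw [Finset.sum_apply] at this
  rw [show (0 : Lambda n) ∅ = 0 from rfl] at this
  rw [← this]
  apply Finset.sum_congr rfl; intro k _
  show (Wmap n ∘ₗ oneMScale n) F (mono n {k}) {k} = _
  rw [St_coef, Pi.sub_apply, AA_univ_apply, pd_apply]
  · simp [sg, msign]
  · intro e
    have := congrArg Finset.card e
    simp at this
    omega

lemma dd_wt (hn : 4 ≤ n) {t : CT} (ht : okT t) (k : Fin n) :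
    dd n t k ∈ wtsp t n (t.algebra n) (wt n t ∅ k) := by
  refine ⟨dd_mem n ht k, fun h => ?_⟩
  unfold dd
  split_ifs with hS
  · subst hS
    rw [map_sub, sb_diag n h.2.2, sb_diag n h.2.2, wt_apply, smul_sub]
    congr 2
    rw [ww_apply, ww_apply, St_trace n hn h.2.1]; simp
  · exact sb_diag n h.2.2 ∅ k

lemma X_ee (i : Fin n) (T : Finset (Fin n)) (h : i ∉ T) (j : Fin n) :
    XX n i * AA n T * pd n j = sg n i T • ee n (insert i T) j := by
  rw [XX_AA n i T h, smul_mul_assoc]; rfl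

lemma bb_wt {t : CT} (ht : okT t) (T : Finset (Fin n)) (i j : Fin n) (hi : i ∉ T) (hj : j ∉ T) :
    bb n T i j ∈ wtsp t n (t.algebra n) (wt n t (insert i T) i) := by
  refine ⟨bb_mem n ht T i j hi hj, fun h => ?_⟩
  unfold bb
  rw [X_ee n i T hi, X_ee n j T hj, map_sub, map_smul, map_smul, sb_diag n h.2.2,
    sb_diag n h.2.2, wt_apply, smul_sub, smul_comm, smul_comm (sg n j T)]
  congr 2
  rw [ww_apply, ww_apply, Finset.sum_insert hi, Finset.sum_insert hj]; ring

lemma span_HW (hn : 4 ≤ n) {t : CT} (ht : okT t) (hev : t = CT.St → Even n) :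
    t.algebra n ≤ Submodule.span ℂ {x | IsHW n t x} := by
  refine (alg_le_span n ht).trans (Submodule.span_mono ?_)
  rintro x (⟨S, j, hS, hj, rfl⟩ | ⟨k, rfl⟩ | ⟨T, i, j, hij, hi, hj, rfl⟩ | ⟨rfl, S, i, rfl⟩)
  · have := ee_mem n ht S j hS hj
    exact ⟨this, ⟨_, ee_par n S j⟩, _, ee_wt n S j this⟩
  · exact ⟨dd_mem n ht k, ⟨_, dd_par n hev k⟩, _, dd_wt n hn ht k⟩
  · exact ⟨bb_mem n ht T i j hi hj, ⟨_, bb_par n T i j⟩, _, bb_wt n ht T i j hi hj⟩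
  · have : ee n S i ∈ CT.W.algebra n := ⟨_, Wmap_single_mono n S i⟩
    exact ⟨this, ⟨_, ee_par n S i⟩, _, ee_wt n S i this⟩

lemma NN_diag (k : Fin n) : NN n k ∈ diagSpan n := Submodule.subset_span ⟨k, rfl⟩

/-- `x_k∂_k - x_l∂_l` in the Cartan subalgebra -/
lemma Ndiff_mem {t : CT} (ht : okT t) (k l : Fin n) : NN n k - NN n l ∈ t.cartan n := by
  refine ⟨?_, Submodule.sub_mem _ (NN_diag n k) (NN_diag n l)⟩
  have := bb_mem n ht ∅ k l (by simp) (by simp)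
  unfold bb at this
  rw [AA_empty, mul_one, mul_one] at this
  exact this

lemma N_mem (k : Fin n) : NN n k ∈ CT.W.cartan n := by
  refine ⟨?_, NN_diag n k⟩
  exact ⟨_, Wmap_single_mono n {k} k⟩

lemma Wn_ext {D D' : E n} (hD : D ∈ Wn n) (hD' : D' ∈ Wn n)
    (h : ∀ i, D (mono n {i}) = D' (mono n {i})) : D = D' := by
  rw [Wn_expand n hD, Wn_expand n hD']
  simp only [h]

lemma coef_wt {t : CT} {β : Module.Dual ℂ (t.cartan n)} {y : E n}
    (hy : y ∈ wtsp t n (t.algebra n) β) (h : t.cartan n) (S : Finset (Fin n)) (i : Fin n)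
    (hne : y (mono n {i}) S ≠ 0) : ww n S i h = β h := by
  have h1 := diag_coef n h.2.2 y S i
  rw [hy.2 h, LinearMap.smul_apply, Pi.smul_apply, smul_eq_mul] at h1
  exact (mul_right_cancel₀ hne h1).symm

/-- coordinates of the weight of `x_S ∂_i` -/
def co (S : Finset (Fin n)) (i k : Fin n) : ℤ :=
  (if k ∈ S then 1 else 0) - (if k = i then 1 else 0)

lemma ww_co (S : Finset (Fin n)) (i k : Fin n) : ww n S i (NN n k) = (co n S i k : ℂ) := by
  rw [ww_NN]; unfold co; push_cast; rfl

lemma coef_diff {t : CT} (ht : okT t) {A : Finset (Fin n)} {a : Fin n} {y : E n}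
    (hy : y ∈ wtsp t n (t.algebra n) (wt n t A a)) (S : Finset (Fin n)) (i : Fin n)
    (hne : y (mono n {i}) S ≠ 0) (k l : Fin n) :
    co n S i k - co n S i l = co n A a k - co n A a l := by
  have := coef_wt n hy ⟨_, Ndiff_mem n ht k l⟩ S i hne
  rw [wt_apply] at this
  simp only [map_sub, ww_co] at this
  exact_mod_cast this

lemma coef_W {A : Finset (Fin n)} {a : Fin n} {y : E n}
    (hy : y ∈ wtsp CT.W n (CT.W.algebra n) (wt n CT.W A a)) (S : Finset (Fin n)) (i : Fin n)
    (hne : y (mono n {i}) S ≠ 0) (k : Fin n) :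
    co n S i k = co n A a k := by
  have := coef_wt n hy ⟨_, N_mem n k⟩ S i hne
  rw [wt_apply] at this
  simp only [ww_co] at this
  exact_mod_cast this

lemma co_unique1 {S A : Finset (Fin n)} {i a : Fin n} (hA : A.Nonempty) (ha : a ∉ A)
    (h : ∀ k l, co n S i k - co n S i l = co n A a k - co n A a l) : S = A ∧ i = a := by
  obtain ⟨k0, hk0⟩ := hA
  have hka : k0 ≠ a := fun e => ha (e ▸ hk0)
  have h1 := h k0 a
  have hi : a = i ∧ a ∉ S := by
    unfold co at h1
    simp only [hk0, hka, ha, if_true, if_false] at h1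
    constructor
    · by_contra hc
      simp only [hc, if_false] at h1
      split_ifs at h1 <;> omega
    · intro hc
      simp only [hc, if_true] at h1
      split_ifs at h1 <;> omega
  obtain ⟨rfl, haS⟩ := hi
  refine ⟨?_, rfl⟩
  ext k
  have h2 := h k a
  unfold co at h2
  by_cases hk : k = a
  · subst hk; simp [ha, haS]
  · simp only [hk, ha, haS, if_false, if_true] at h2
    by_cases h3 : k ∈ S <;> by_cases h4 : k ∈ A <;> simp [h3, h4] at h2 ⊢

lemma co_unique2 {S : Finset (Fin n)} {i a : Fin n} 
    (h : ∀ k l, co n S i k - co n S i l = co n ∅ a k - co n ∅ a l) :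
    i = a ∧ (S = ∅ ∨ S = Finset.univ) := by
  have hi : i = a := by
    by_contra hc
    have h1 := h i a
    unfold co at h1
    simp only [hc, Ne.symm hc, if_true, if_false, Finset.notMem_empty] at h1
    split_ifs at h1 <;> omega
  subst hi
  refine ⟨rfl, ?_⟩
  have h2 : ∀ k, k ∈ S ↔ i ∈ S := by
    intro k
    by_cases hk : k = i
    · rw [hk]
    have h1 := h k i
    unfold co at h1
    simp only [hk, if_true, if_false, Finset.notMem_empty] at h1
    by_cases h3 : k ∈ S <;> by_cases h4 : i ∈ S <;> simp [h3, h4] at h1 ⊢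
  by_cases h3 : i ∈ S
  · right; ext k; simp [h2 k, h3]
  · left; ext k; simp [h2 k, h3]

lemma good_ee {t : CT} (ht : okT t) (S : Finset (Fin n)) (j : Fin n) (hS : S.Nonempty)
    (hj : j ∉ S) : Good n t (ee n S j) := by
  have hm := ee_mem n ht S j hS hj
  refine ⟨hm, ⟨_, ee_par n S j⟩, _, ee_wt n S j hm, ?_, ?_⟩
  · obtain ⟨k, hk⟩ := hS
    refine ⟨⟨_, Ndiff_mem n ht k j⟩, ?_⟩
    rw [wt_apply]
    simp only [map_sub, ww_NN, hk, hj, if_true, if_false]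
    have : k ≠ j := fun e => hj (e ▸ hk)
    simp only [this, if_false]; norm_num
  · intro y hy
    refine ⟨_, Wn_unique n (alg_le_Wn n ht hy.1) S j ?_⟩
    intro S' i hne
    by_contra hc
    exact hne (co_unique1 n hS hj (coef_diff n ht hy S' i hc))

lemma div_top {F : Fin n → Lambda n} (hF : F ∈ divFree n) (a : Fin n) : F a Finset.univ = 0 := by
  have hdiv : ∑ i, pd n i (F i) = 0 := hF
  have := congrFun hdiv (Finset.univ.erase a)
  rw [Finset.sum_apply, Finset.sum_eq_single a] at this
  · rw [pd_apply, if_neg (Finset.notMem_erase a _), Finset.insert_erase (Finset.mem_univ a)] at this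
    exact (mul_eq_zero.1 this).resolve_left (sg_ne n _ _)
  · intro b _ hb
    rw [pd_apply, if_pos (Finset.mem_erase.2 ⟨hb, Finset.mem_univ b⟩)]
  · intro h; exact absurd (Finset.mem_univ a) h

lemma top_coef (hn : 4 ≤ n) {t : CT} (ht : okT t) (a : Fin n) {y : E n}
    (hy : y ∈ wtsp t n (t.algebra n) (wt n t ∅ a)) :
    y (mono n {a}) Finset.univ = if t = CT.St then - y (mono n {a}) ∅ else 0 := by
  rcases ht with rfl | rfl | rfl
  · simp only [reduceCtorEq, if_false]
    by_contra hc
    have := coef_W n hy _ _ hc a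
    simp [co] at this
  · obtain ⟨F, hF, rfl⟩ := hy.1
    simp only [reduceCtorEq, if_false]
    rw [Wmap_apply]; exact div_top n hF a
  · obtain ⟨F, hF, rfl⟩ := hy.1
    simp only [if_true]
    rw [St_coef, Pi.sub_apply, Pi.sub_apply, univ_apply, div_top n hF a, AA_univ_apply]
    · ring
    · intro e
      have := congrArg Finset.card e
      simp at this
      omega

lemma dd_single {t : CT} (k i : Fin n) (S : Finset (Fin n)) :
    dd n t k (mono n {i}) S = if k = i then
      (mono n ∅ S - if t = CT.St then mono n Finset.univ S else 0) else 0 := by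
  unfold dd
  split_ifs with h1 h2 h2
  · rw [LinearMap.sub_apply, ee_single, ee_single, if_pos h2, if_pos h2]; rfl
  · rw [LinearMap.sub_apply, ee_single, ee_single, if_neg h2, if_neg h2]; simp
  · rw [ee_single, if_pos h2]; simp
  · rw [ee_single, if_neg h2]; rfl

lemma good_dd (hn : 4 ≤ n) {t : CT} (ht : okT t) (hev : t = CT.St → Even n) (a : Fin n) :
    Good n t (dd n t a) := by
  have hne : (∅ : Finset (Fin n)) ≠ Finset.univ := by
    intro e
    have := congrArg Finset.card e
    simp at this
    omega
  refine ⟨dd_mem n ht a, ⟨_, dd_par n hev a⟩, _, dd_wt n hn ht a, ?_, ?_⟩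
  · have : Nontrivial (Fin n) := Fin.nontrivial_iff_two_le.2 (by omega)
    obtain ⟨l, hl⟩ := exists_ne a
    refine ⟨⟨_, Ndiff_mem n ht a l⟩, ?_⟩
    rw [wt_apply]
    simp [map_sub, ww_NN, hl]
  · intro y hy
    refine ⟨y (mono n {a}) ∅, Wn_ext n (alg_le_Wn n ht hy.1)
      (Submodule.smul_mem _ _ (alg_le_Wn n ht (dd_mem n ht a))) ?_⟩
    intro i
    funext S
    rw [LinearMap.smul_apply, Pi.smul_apply, dd_single, smul_eq_mul]
    by_cases hc : y (mono n {i}) S = 0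
    · rw [hc]
      split_ifs with h1 h2
      · subst h1
        by_cases hS : S = ∅
        · subst hS; rw [hc, zero_mul]
        · by_cases hS2 : S = Finset.univ
          · subst hS2
            rw [top_coef n hn ht a hy, if_pos h2, neg_eq_zero] at hc
            rw [hc, zero_mul]
          · simp [mono, hS, hS2]
      · subst h1
        by_cases hS : S = ∅
        · subst hS; rw [hc, zero_mul]
        · simp [mono, hS]
      · simp
    · obtain ⟨rfl, rfl | rfl⟩ := co_unique2 n (coef_diff n ht hy S i hc)
      · simp [mono, hne]
      · rw [top_coef n hn ht i hy]
        simp only [mono, hne.symm, if_true, if_false]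
        split_ifs <;> ring

lemma good_top (hn : 4 ≤ n) (a : Fin n) : Good n CT.W (ee n Finset.univ a) := by
  have hm : ee n Finset.univ a ∈ CT.W.algebra n := ⟨_, Wmap_single_mono n _ a⟩
  refine ⟨hm, ⟨_, ee_par n _ a⟩, _, ee_wt n _ a hm, ?_, ?_⟩
  · have : Nontrivial (Fin n) := Fin.nontrivial_iff_two_le.2 (by omega)
    obtain ⟨l, hl⟩ := exists_ne a
    refine ⟨⟨_, N_mem n l⟩, ?_⟩
    rw [wt_apply]
    simp [ww_NN, hl]
  · intro y hy
    refine ⟨_, Wn_unique n hy.1 Finset.univ a ?_⟩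
    intro S i hne
    by_contra hc
    apply hne
    have h := coef_W n hy S i hc
    have h1 : ∀ k, k ≠ a → k ∈ S ∧ k ≠ i := by
      intro k hk
      have := h k
      unfold co at this
      simp only [hk, if_false, Finset.mem_univ, if_true] at this
      constructor
      · by_contra h3
        simp only [h3, if_false] at this
        split_ifs at this <;> omega
      · intro h3
        simp only [h3, if_true] at this
        split_ifs at this <;> omega
    have hi : i = a := by
      by_contra h3
      exact (h1 i h3).2 rfl
    subst hi
    refine ⟨?_, rfl⟩
    ext k
    simp only [Finset.mem_univ, iff_true]
    by_cases hk : k = i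
    · subst hk
      have := h k
      unfold co at this
      simp only [Finset.mem_univ, if_true] at this
      by_contra h3
      simp only [h3, if_false] at this
      omega
    · exact (h1 k hk).1



/-! ## Brackets -/

lemma br_bb (T : Finset (Fin n)) (i j : Fin n) (hij : i ≠ j) (hi : i ∉ T) (hj : j ∉ T) :
    bb n T i j = sbL n (XX n i * AA n T * pd n j) (ee n {j} i) := by
  have hp : XX n i * AA n T * pd n j ∈ epar n (1 + (T.card : ZMod 2) + 1) :=
    epar_mul n (epar_mul n (epar_X n i) (epar_A n T)) (epar_P n j)
  have hq : ee n {j} i ∈ epar n 0 := by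
    have := ee_par n {j} i
    simpa [show (1 + 1 : ZMod 2) = 0 from rfl] using this
  rw [sb_hom n hp hq, mul_zero, sgn_zero, one_smul]
  change _ = XX n i * AA n T * pd n j * (XX n j * pd n i)
    - XX n j * pd n i * (XX n i * AA n T * pd n j)
  have e1 : XX n i * AA n T * pd n j * (XX n j * pd n i)
      = XX n i * AA n T * pd n i - XX n i * (AA n T * XX n j) * pd n j * pd n i := by
    have : XX n i * AA n T * pd n j * (XX n j * pd n i)
      = XX n i * AA n T * (pd n j * XX n j) * pd n i := by simp only [mul_assoc]
    rw [this, car_PX_self]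
    simp only [mul_sub, sub_mul, mul_one, mul_assoc]
  have e2 : XX n j * pd n i * (XX n i * AA n T * pd n j)
      = XX n j * AA n T * pd n j - XX n j * XX n i * (pd n i * AA n T) * pd n j := by
    have : XX n j * pd n i * (XX n i * AA n T * pd n j)
      = XX n j * (pd n i * XX n i) * AA n T * pd n j := by simp only [mul_assoc]
    rw [this, car_PX_self]
    simp only [mul_sub, sub_mul, mul_one, mul_assoc]
  have e3 : XX n i * (AA n T * XX n j) * pd n j * pd n i
      = XX n j * XX n i * (pd n i * AA n T) * pd n j := by
    have hs : AA n T * XX n j = msign T.card • (XX n j * AA n T) := by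
      rw [X_AA, smul_smul]; simp [msign, ← pow_add, ← two_mul]
    rw [hs, P_AA n i T hi]
    have : XX n i * (msign T.card • (XX n j * AA n T)) * pd n j * pd n i
      = msign T.card • ((XX n i * XX n j) * AA n T * (pd n j * pd n i)) := by
      simp only [mul_assoc, smul_mul_assoc, mul_smul_comm]
    rw [this, car_XX n i j, car_PP n j i]
    have : XX n j * XX n i * (msign T.card • (AA n T * pd n i)) * pd n j
      = msign T.card • ((XX n j * XX n i) * AA n T * (pd n i * pd n j)) := by
      simp only [mul_assoc, smul_mul_assoc, mul_smul_comm]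
    rw [this]
    congr 1
    apply LinearMap.ext; intro f
    simp only [Module.End.mul_apply, LinearMap.neg_apply, map_neg, neg_neg]
  rw [e1, e2, e3]
  unfold bb
  abel

lemma br_ee (T : Finset (Fin n)) (i k : Fin n) (hk : k ∉ T) :
    ee n T i = sbL n (pd n k) (XX n k * AA n T * pd n i) := by
  have hp : XX n k * AA n T * pd n i ∈ epar n (1 + (T.card : ZMod 2) + 1) :=
    epar_mul n (epar_mul n (epar_X n k) (epar_A n T)) (epar_P n i)
  rw [sb_hom n (epar_P n k) hp, one_mul, sgn_add, sgn_add, sgn_one, sgn_cast]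
  have e1 : pd n k * (XX n k * AA n T * pd n i) = AA n T * pd n i
      - XX n k * (pd n k * AA n T) * pd n i := by
    have : pd n k * (XX n k * AA n T * pd n i) = (pd n k * XX n k) * AA n T * pd n i := by
      simp only [mul_assoc]
    rw [this, car_PX_self]
    simp only [sub_mul, one_mul, mul_assoc]
  have e2 : XX n k * (pd n k * AA n T) * pd n i
      = msign T.card • (XX n k * AA n T * (pd n k * pd n i)) := by
    rw [P_AA n k T hk]
    simp only [mul_assoc, smul_mul_assoc, mul_smul_comm]
  have e3 : XX n k * AA n T * (pd n k * pd n i) = - (XX n k * AA n T * pd n i * pd n k) := by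
    rw [car_PP n k i]
    apply LinearMap.ext; intro f
    simp only [Module.End.mul_apply, LinearMap.neg_apply, map_neg]
  rw [e1, e2, e3]
  unfold ee
  module

lemma mono_ne (T : Finset (Fin n)) : mono n T ≠ 0 := by
  intro h
  have := congrFun h T
  simp [mono] at this

lemma sb_eval {D F : E n} (hD : ∃ p, D ∈ epar n p) (hF : ∃ q, F ∈ epar n q) (v : Lambda n)
    (h : D v = 0) : sbL n D F v = D (F v) := by
  obtain ⟨p, hp⟩ := hD
  obtain ⟨q, hq⟩ := hF
  rw [sb_hom n hp hq, LinearMap.sub_apply, LinearMap.smul_apply, Module.End.mul_apply,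
    Module.End.mul_apply, h, map_zero, smul_zero, sub_zero]

lemma br_dd_ne (t : CT) (hev : t = CT.St → Even n) (S : Finset (Fin n)) (j k : Fin n)
    (hk : k ∈ S) (hj : j ∉ S) : sbL n (dd n t k) (ee n S j) ≠ 0 := by
  intro h
  have h1 : dd n t k (mono n {j}) = 0 := by
    funext U
    rw [dd_single, if_neg]; rfl
    rintro rfl; exact hj hk
  have h2 := sb_eval n ⟨_, dd_par n hev k⟩ ⟨_, ee_par n S j⟩ (mono n {j}) h1
  rw [h, ee_single, if_pos rfl, LinearMap.zero_apply] at h2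
  have h3 := congrFun h2 (S.erase k)
  have h5 : ee n ∅ k (mono n S) = sg n k (S.erase k) • mono n (S.erase k) := by
    unfold ee
    rw [AA_empty, one_mul, ← pd_mono_insert n k _ (Finset.notMem_erase k S),
      Finset.insert_erase hk]
  have h4 : dd n t k (mono n S) (S.erase k) = sg n k (S.erase k) := by
    unfold dd
    split_ifs
    · rw [LinearMap.sub_apply, h5, Pi.sub_apply]
      have : ee n Finset.univ k (mono n S) (S.erase k) = 0 := by
        unfold ee
        rw [Module.End.mul_apply, AA_univ_apply]
        intro e
        exact Finset.notMem_erase k S (e ▸ Finset.mem_univ k)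
      rw [this]; simp [mono]
    · rw [h5]; simp [mono]
  rw [h4] at h3
  exact sg_ne n _ _ h3.symm

lemma br_link_ne (a b c : Fin n) (hbc : b ≠ c) :
    sbL n (ee n {a} b) (ee n {b} c) ≠ 0 := by
  intro h
  have h1 : ee n {a} b (mono n {c}) = 0 := by rw [ee_single, if_neg hbc]
  have h2 := sb_eval n ⟨_, ee_par n {a} b⟩ ⟨_, ee_par n {b} c⟩ (mono n {c}) h1
  rw [h, ee_single, if_pos rfl, ee_single, if_pos rfl] at h2
  exact mono_ne n _ h2.symm

lemma sb_ne_symm {D F : E n} (hD : ∃ p, D ∈ epar n p) (hF : ∃ q, F ∈ epar n q)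
    (h : sbL n D F ≠ 0) : sbL n F D ≠ 0 := by
  obtain ⟨p, hp⟩ := hD
  obtain ⟨q, hq⟩ := hF
  intro h'
  apply h
  rw [sb_antisymm n hp hq, h', smul_zero, neg_zero]

lemma br_top_ne (hn : 4 ≤ n) (k i : Fin n) : sbL n (dd n CT.W k) (ee n Finset.univ i) ≠ 0 := by
  have h := br_ee n (Finset.univ.erase k) i k (Finset.notMem_erase k _)
  rw [X_ee n k _ (Finset.notMem_erase k _), Finset.insert_erase (Finset.mem_univ k),
    map_smul] at h
  have hd : dd n CT.W k = pd n k := by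
    simp [dd, ee, AA_empty]
  rw [hd]
  intro h'
  rw [h', smul_zero] at h
  have := LinearMap.congr_fun h (mono n {i})
  rw [ee_single, if_pos rfl] at this
  exact mono_ne n _ this

/-! ## Conclusion -/

lemma main_aux (hn : 4 ≤ n) {t : CT} (ht : okT t) (hev : t = CT.St → Even n)
    {pf : ZMod 2} {f : E n →ₗ[ℂ] E n →ₗ[ℂ] E n}
    (hf : IsSuperBider n (t.algebra n) pf f) (hw : t.HasWeight n f 0) :
    ∃ lam : ℂ, ∀ x ∈ t.algebra n, ∀ y ∈ t.algebra n, f x y = lam • sbL n x y := by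
  have hsp := span_HW n hn ht hev
  have R := fun g (hg : Good n t g) => core_right hf hw hsp hg
  have Lf := fun g (hg : Good n t g) => core_left hf hw hsp hg
  choose! lamR hR0 hR using R
  choose! lamL hL using Lf
  have link : ∀ g g', Good n t g → Good n t g' → sbL n g g' ≠ 0 → lamL g = lamR g' := by
    intro g g' hg hg' hne
    have h1 := hL g hg g' hg'.1
    rw [hR g' hg' g hg.1] at h1
    exact (smul_left_injective ℂ hne h1).symm
  have gd := good_dd n hn ht hev
  have ge := good_ee n ht
  have third : ∀ a b : Fin n, ∃ c, c ≠ a ∧ c ≠ b := by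
    intro a b
    have : ({a, b} : Finset (Fin n)).card < (Finset.univ : Finset (Fin n)).card := by
      have := Finset.card_le_two (a := a) (b := b)
      simp; omega
    obtain ⟨c, _, hc⟩ := Finset.exists_mem_notMem_of_card_lt_card this
    simp at hc
    exact ⟨c, hc.1, hc.2⟩
  have k0 : Fin n := ⟨0, by omega⟩
  have hdd : ∀ k, lamL (dd n t k) = lamL (dd n t k0) := by
    intro k
    obtain ⟨j, hj1, hj2⟩ := third k k0
    have hj : j ∉ ({k, k0} : Finset (Fin n)) := by simp [hj1, hj2]
    have hne : ({k, k0} : Finset (Fin n)).Nonempty := ⟨k, by simp⟩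
    rw [link _ _ (gd k) (ge _ j hne hj) (br_dd_ne n t hev _ j k (by simp) hj),
      link _ _ (gd k0) (ge _ j hne hj) (br_dd_ne n t hev _ j k0 (by simp) hj)]
  have hee : ∀ S j, S.Nonempty → j ∉ S → lamR (ee n S j) = lamL (dd n t k0) := by
    intro S j hS hj
    obtain ⟨k, hk⟩ := id hS
    rw [← hdd k, link _ _ (gd k) (ge S j hS hj) (br_dd_ne n t hev S j k hk hj)]
  have hdR : ∀ k, lamR (dd n t k) = lamL (dd n t k0) := by
    intro k
    obtain ⟨j, hj, _⟩ := third k k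
    obtain ⟨m, hm1, hm2⟩ := third k j
    have hjk : j ∉ ({k} : Finset (Fin n)) := by simpa using hj
    have hmj : m ∉ ({j} : Finset (Fin n)) := by simpa using hm2
    have g1 := ge {k} j ⟨k, by simp⟩ hjk
    have g2 := ge {j} m ⟨j, by simp⟩ hmj
    rw [← link _ _ g1 (gd k) (sb_ne_symm n (gd k).2.1 g1.2.1
      (br_dd_ne n t hev _ j k (by simp) hjk)),
      link _ _ g1 g2 (br_link_ne n k j m (Ne.symm hm2)), hee _ m ⟨j, by simp⟩ hmj]
  refine ⟨lamL (dd n t k0), ?_⟩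
  generalize hlam : lamL (dd n t k0) = lam at *
  have hl0 : pf = 1 → lam = 0 := fun hp => by rw [← hdR k0]; exact hR0 _ (gd k0) hp
  have Mdd : ∀ k, ∀ x ∈ t.algebra n, f x (dd n t k) = lam • sbL n x (dd n t k) := by
    intro k x hx
    rw [hR _ (gd k) x hx, hdR k]
  have Mee : ∀ S j, S.Nonempty → j ∉ S →
      ∀ x ∈ t.algebra n, f x (ee n S j) = lam • sbL n x (ee n S j) := by
    intro S j hS hj x hx
    rw [hR _ (ge S j hS hj) x hx, hee S j hS hj]
  intro x hx y hy
  have hy' := alg_le_span n ht hy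
  clear hy
  induction hy' using Submodule.span_induction with
  | mem y hy =>
    rcases hy with ⟨S, j, hS, hj, rfl⟩ | ⟨k, rfl⟩ | ⟨T, i, j, hij, hi, hj, rfl⟩ | ⟨rfl, S, i, rfl⟩
    · exact Mee S j hS hj x hx
    · exact Mdd k x hx
    · rw [br_bb n T i j hij hi hj, X_ee n i T hi, map_smul, LinearMap.smul_apply, map_smul,
        map_smul, smul_comm lam]
      congr 1
      have h1 : j ∉ insert i T := by simp [hj, Ne.symm hij]
      have h2 : i ∉ ({j} : Finset (Fin n)) := by simpa using hij
      exact M_closed hf hsp hl0 (ee_mem n ht _ _ (Finset.insert_nonempty _ _) h1)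
        (ee_mem n ht _ _ ⟨j, by simp⟩ h2) (ee_par n _ _) (ee_par n _ _)
        (Mee _ _ (Finset.insert_nonempty _ _) h1) (Mee _ _ ⟨j, by simp⟩ h2) x hx
    · have hd : ∀ k, dd n CT.W k = pd n k := by
        intro k
        simp [dd, ee, AA_empty]
      have key : ∀ (C S : Finset (Fin n)), S = Finset.univ \ C → ∀ x ∈ CT.W.algebra n,
          f x (ee n S i) = lam • sbL n x (ee n S i) := by
        intro C
        induction C using Finset.induction_on with
        | empty =>
          rintro S rfl x hx
          rw [Finset.sdiff_empty]
          rw [hR _ (good_top n hn i) x hx,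
            ← link _ _ (gd k0) (good_top n hn i) (br_top_ne n hn k0 i), hlam]
        | insert k C hk ih =>
          rintro S rfl x hx
          have hkS : k ∉ Finset.univ \ insert k C := by simp
          rw [br_ee n _ i k hkS, X_ee n k _ hkS, map_smul, map_smul, map_smul, smul_comm lam]
          congr 1
          have hm : ee n (insert k (Finset.univ \ insert k C)) i ∈ CT.W.algebra n :=
            ⟨_, Wmap_single_mono n _ i⟩
          rw [← hd k]
          refine M_closed hf hsp hl0 (dd_mem n ht k) hm (dd_par n hev k) (ee_par n _ _)
            (Mdd k) (ih _ ?_) x hx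
          ext a
          simp only [Finset.mem_insert, Finset.mem_sdiff, Finset.mem_univ, true_and]
          by_cases ha : a = k
          · subst ha; simp [hk]
          · simp [ha]
      exact key (Finset.univ \ S) S (by simp) x hx
  | zero => simp
  | add y z _ _ hx hy => simp only [map_add, hx, hy, smul_add]
  | smul a y _ hx => simp only [map_smul, hx]; rw [smul_comm]



/-- For `L = W(n)`, `S(n)` or `S̃(n)` (`n` even), `n ≥ 4`, a
super-biderivation `f ∈ BDer(L)_θ` of zero weight is inner: there is `λ ∈ ℂ` with
`f(x,y) = λ[x,y]` for all `x, y ∈ L`. -/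
theorem superBider_zero_weight_inner (n : ℕ) (hn : 4 ≤ n) (t : CT)
    (ht : t = CT.W ∨ t = CT.S ∨ (t = CT.St ∧ Even n))
    (pf : ZMod 2) (f : E n →ₗ[ℂ] E n →ₗ[ℂ] E n)
    (hf : IsSuperBider n (t.algebra n) pf f)
    (hw : t.HasWeight n f 0) :
    ∃ lam : ℂ, ∀ x ∈ t.algebra n, ∀ y ∈ t.algebra n, f x y = lam • sbL n x y := by
  refine main_aux n hn (t := t) ?_ ?_ hf hw
  · rcases ht with h | h | h
    · exact Or.inl h
    · exact Or.inr (Or.inl h)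
    · exact Or.inr (Or.inr h.1)
  · intro h
    rcases ht with h' | h' | h'
    · rw [h'] at h; cases h
    · rw [h'] at h; cases h
    · exact h'.2

end CartanSuper
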